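/- Let u be a nontrivial entire harmonic function on ℝ². Then the following are equivalent: (i) there exists k ∈ ℕ, k ≥ 1, such that the set {u ≠ 0} has exactly k connected components; (ii) the limit N∞ = lim_{t→+∞} N(0,u,t) of the Almgren frequency of u at the origin exists and is finite. -/

import Mathlib

open MeasureTheory Metric Filter

/-- The Laplacian of `u : ℝⁿ → ℝ` at `x`, as the sum of second partial derivatives. -/
noncomputable def lapl {n : ℕ} (u : EuclideanSpace ℝ (Fin n) → ℝ)
    (x : EuclideanSpace ℝ (Fin n)) : ℝ :=
  ∑ i, fderiv ℝ (fun y => fderiv ℝ u y (EuclideanSpace.single i 1)) x (EuclideanSpace.single i 1)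

/-- `u` is harmonic on all of ℝⁿ: it is C² and its Laplacian vanishes identically. -/
def HarmonicFn {n : ℕ} (u : EuclideanSpace ℝ (Fin n) → ℝ) : Prop :=
  ContDiff ℝ 2 u ∧ ∀ x, lapl u x = 0

/-- `u` is harmonic on the (open) set `Ω`: it is C² on `Ω` and its Laplacian vanishes on `Ω`. -/
def HarmonicFnOn {n : ℕ} (u : EuclideanSpace ℝ (Fin n) → ℝ)
    (Ω : Set (EuclideanSpace ℝ (Fin n))) : Prop :=
  ContDiffOn ℝ 2 u Ω ∧ ∀ x ∈ Ω, lapl u x = 0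

/-- The Dirichlet integral `D(x₀,u,r) = ∫_{B_r(x₀)} |∇u|² dx`. -/
noncomputable def DInt {n : ℕ} (u : EuclideanSpace ℝ (Fin n) → ℝ)
    (x₀ : EuclideanSpace ℝ (Fin n)) (r : ℝ) : ℝ :=
  ∫ x in Metric.ball x₀ r, ‖gradient u x‖ ^ 2

/-- The height `H(x₀,u,r) = ∫_{∂B_r(x₀)} u² dσ`, with respect to the
`(n-1)`-dimensional Hausdorff measure on the sphere. -/
noncomputable def HInt {n : ℕ} (u : EuclideanSpace ℝ (Fin n) → ℝ)
    (x₀ : EuclideanSpace ℝ (Fin n)) (r : ℝ) : ℝ :=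
  ∫ x in Metric.sphere x₀ r, (u x) ^ 2 ∂ μH[(n : ℝ) - 1]

/-- The Almgren frequency `N(x₀,u,r) = r · D(x₀,u,r) / H(x₀,u,r)`. -/
noncomputable def freqN {n : ℕ} (u : EuclideanSpace ℝ (Fin n) → ℝ)
    (x₀ : EuclideanSpace ℝ (Fin n)) (r : ℝ) : ℝ :=
  r * DInt u x₀ r / HInt u x₀ r

/-- The set of connected components of a subset `S` of a topological space. -/
def nodalComponents {X : Type*} [TopologicalSpace X] (S : Set X) : Set (Set X) :=
  {C | ∃ x ∈ S, connectedComponentIn S x = C}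

/-!
Write `u = Re F` with `F` entire; both conditions say that `F` is a polynomial.

Expanding `F` in its Taylor series, the frequency is the logarithmic derivative of a power series
with nonnegative coefficients, evaluated at `r ^ 2`; such a quotient stays bounded exactly when the
series terminates, and then it converges.

If `F` is a polynomial, every nodal domain is unbounded, hence meets a large circle, on which `Re F`
is a trigonometric polynomial with finitely many zeros.

Conversely, let `F` have finitely many nodal domains, and let `w` be imaginary. Near a simple
solution `a` of `F a = w` the nodal line separates two nodal domains, and by a topological argument
the plane leaves no room for a second solution between the same ordered pair of domains. So the
number of simple solutions of `F = w` is bounded uniformly in `w`. Near a `w` at which it is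
maximal, no solution escapes to infinity, so `F` omits a segment of the imaginary axis outside a
disc. A square root and a Möbius map turn this into boundedness, whence `F` has at most a pole at
infinity.
-/

section CircleAverage

open Complex Real Set

variable {E : Type*} [NormedAddCommGroup E] [NormedSpace ℝ E] {g : ℂ → E}

theorem setIntegral_ball_eq_intervalIntegral_circleAverage (hg : Continuous g) (c : ℂ) {R : ℝ}
    (hR : 0 ≤ R) :
    ∫ z in ball c R, g z = ∫ s in 0..R, (2 * π * s) • circleAverage g c s := by
  have integrable : IntegrableOn (fun p : ℝ × ℝ ↦ p.1 • g (circleMap c p.1 p.2))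
      (Ioo 0 R ×ˢ Ioo (-π) π) := by
    have : Continuous fun p : ℝ × ℝ ↦ p.1 • g (circleMap c p.1 p.2) := by fun_prop
    exact (this.continuousOn.integrableOn_compact (isCompact_Icc.prod isCompact_Icc)).mono_set
      (prod_mono Ioo_subset_Icc_self Ioo_subset_Icc_self)
  have angular (s : ℝ) :
      ∫ θ in Ioo (-π) π, s • g (circleMap c s θ) = (2 * π * s) • circleAverage g c s := by
    have periodic : Function.Periodic (fun θ ↦ g (circleMap c s θ)) (2 * π) :=
      (periodic_circleMap c s).comp g
    have := periodic.intervalIntegral_add_eq (-π) 0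
    rw [show -π + 2 * π = π by ring, zero_add] at this
    rw [integral_smul, ← integral_Ioc_eq_integral_Ioo,
      ← intervalIntegral.integral_of_le (by linarith [pi_pos]), this, circleAverage_def, smul_smul]
    congr 1
    field_simp
  have polar : EqOn
      (fun p ↦ p.1 • (ball (0 : ℂ) R).indicator (fun z ↦ g (z + c)) (Complex.polarCoord.symm p))
      ((Iio R ×ˢ univ).indicator fun p ↦ p.1 • g (circleMap c p.1 p.2)) polarCoord.target := by
    rintro ⟨s, θ⟩ ⟨hs, -⟩
    have : Complex.polarCoord.symm (s, θ) = circleMap 0 s θ := by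
      simp [Complex.polarCoord_symm_apply, circleMap, Complex.exp_mul_I]
    by_cases h : s < R <;>
      simp [this, indicator, abs_of_pos (mem_Ioi.1 hs), h, circleMap, add_comm c]
  calc ∫ z in ball c R, g z
      = ∫ z, (ball (0 : ℂ) R).indicator (fun z ↦ g (z + c)) z := by
        rw [← integral_indicator measurableSet_ball, ← integral_add_right_eq_self _ c]
        congr 1
        ext z
        simp [indicator]
    _ = ∫ p in Ioo 0 R ×ˢ Ioo (-π) π, p.1 • g (circleMap c p.1 p.2) := by
        rw [← Complex.integral_comp_polarCoord_symm,
          setIntegral_congr_fun polarCoord.open_target.measurableSet polar,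
          setIntegral_indicator (measurableSet_Iio.prod .univ), polarCoord_target,
          prod_inter_prod, inter_univ, Ioi_inter_Iio]
    _ = ∫ s in 0..R, (2 * π * s) • circleAverage g c s := by
        rw [Measure.volume_eq_prod, setIntegral_prod _ integrable,
          intervalIntegral.integral_of_le hR, integral_Ioc_eq_integral_Ioo]
        simp only [angular]

theorem circleAverage_comp_mul_right (g : ℂ → E) (x : ℂ) :
    circleAverage (fun z ↦ g (z * x)) 0 1 = circleAverage g 0 ‖x‖ := by
  rw [circleAverage_eq_integral_add (R := ‖x‖) x.arg, circleAverage_def]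
  congr! 4 with θ
  nth_rewrite 1 [← norm_mul_exp_arg_mul_I x]
  simp only [circleMap, ofReal_one, ofReal_add, add_mul, Complex.exp_add]
  ring

theorem integral_eq_smul_circleAverage_of_rotation_invariant [CompleteSpace E] {ν : Measure ℂ}
    [IsFiniteMeasure ν] {r : ℝ} (hν : ∀ᵐ x ∂ν, ‖x‖ = r)
    (hrot : ∀ a : Circle, MeasurePreserving (rotation a) ν ν) (hg : Continuous g) :
    ∫ x, g x ∂ν = ν.real univ • circleAverage g 0 r := by
  obtain ⟨C, hC⟩ := (isCompact_sphere (0 : ℂ) r).exists_bound_of_continuousOn hg.continuousOn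
  have integrable : Integrable (Function.uncurry fun (θ : ℝ) (x : ℂ) ↦ g (circleMap 0 1 θ * x))
      ((volume.restrict (Ioc 0 (2 * π))).prod ν) := by
    refine .of_bound (C := C) (Continuous.aestronglyMeasurable (by fun_prop)) ?_
    filter_upwards [Measure.quasiMeasurePreserving_snd.ae hν] with p hp
    exact hC _ (by simp [hp])
  have invariant (θ : ℝ) : ∫ x, g (circleMap 0 1 θ * x) ∂ν = ∫ x, g x ∂ν := by
    have := (hrot (Circle.exp θ)).integral_comp
      (rotation (Circle.exp θ)).toHomeomorph.measurableEmbedding g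
    simpa [circleMap] using this
  have inner : ∀ᵐ x ∂ν, ∫ θ in Ioc 0 (2 * π), g (circleMap 0 1 θ * x)
      = (2 * π) • circleAverage g 0 r := by
    filter_upwards [hν] with x hx
    rw [← hx, ← circleAverage_comp_mul_right, circleAverage_def,
      ← intervalIntegral.integral_of_le two_pi_pos.le, smul_inv_smul₀ two_pi_pos.ne']
  have fubini := integral_integral_swap integrable
  rw [integral_congr_ae inner] at fubini
  simp only [invariant, integral_const, measureReal_restrict_apply_univ, Real.volume_real_Ioc,
    sub_zero, max_eq_left two_pi_pos.le, smul_comm (ν.real univ)] at fubini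
  exact smul_right_injective E two_pi_pos.ne' fubini

end CircleAverage

section HausdorffMeasure

open Complex Real Set
open scoped Pointwise

theorem hausdorffMeasure_sphere_lt_top (r : ℝ) : μH[1] (sphere (0 : ℂ) r) < ⊤ := by
  rcases lt_or_ge r 0 with hr | hr
  · simp [sphere_eq_empty_of_neg hr]
  have : sphere (0 : ℂ) r = circleMap 0 r '' Ioc 0 (2 * π) := by simp [abs_of_nonneg hr]
  rw [this]
  refine ((lipschitzWith_circleMap 0 r).hausdorffMeasure_image_le zero_le_one _).trans_lt ?_
  simp [hausdorffMeasure_real, ENNReal.mul_lt_top]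

theorem hausdorffMeasure_unitCircle_pos : 0 < μH[1] (sphere (0 : ℂ) 1) := by
  have hre : LipschitzWith 1 re := LipschitzWith.of_dist_le_mul fun x y ↦ by
    simpa [dist_eq_norm] using abs_re_le_norm (x - y)
  have hsub : Icc (-1) 1 ⊆ re '' sphere (0 : ℂ) 1 := fun x hx ↦
    ⟨circleMap 0 1 (arccos x), by simp,
      by simp [circleMap, exp_ofReal_mul_I_re, cos_arccos hx.1 hx.2]⟩
  have hle := (measure_mono hsub).trans (hre.hausdorffMeasure_image_le zero_le_one _)
  rw [hausdorffMeasure_real] at hle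
  exact lt_of_lt_of_le (by simp) (hle.trans_eq (by simp))

theorem hausdorffMeasure_real_sphere {r : ℝ} (hr : 0 < r) :
    μH[1].real (sphere (0 : ℂ) r) = r * μH[1].real (sphere (0 : ℂ) 1) := by
  have : sphere (0 : ℂ) r = r • sphere (0 : ℂ) 1 := by
    simp [smul_sphere' hr.ne', abs_of_pos hr]
  rw [this, Measure.real, Measure.hausdorffMeasure_smul₀ zero_le_one hr.ne']
  simp [Measure.real, abs_of_pos hr]

theorem setIntegral_sphere_hausdorffMeasure {E : Type*} [NormedAddCommGroup E] [NormedSpace ℝ E]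
    [CompleteSpace E] {g : ℂ → E} (hg : Continuous g) (r : ℝ) :
    ∫ x in sphere (0 : ℂ) r, g x ∂μH[1] =
      μH[1].real (sphere (0 : ℂ) r) • circleAverage g 0 r := by
  have : IsFiniteMeasure (μH[1].restrict (sphere (0 : ℂ) r)) :=
    ⟨by simpa using hausdorffMeasure_sphere_lt_top r⟩
  rw [integral_eq_smul_circleAverage_of_rotation_invariant (r := r) ?_ (fun a ↦ ?_) hg,
    measureReal_restrict_apply_univ]
  · filter_upwards [ae_restrict_mem isClosed_sphere.measurableSet] with x hx using by simpa using hx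
  · have := (rotation a).toIsometryEquiv.measurePreserving_hausdorffMeasure 1
    have := this.restrict_preimage_emb (rotation a).toHomeomorph.measurableEmbedding (sphere 0 r)
    rwa [LinearIsometryEquiv.coe_toIsometryEquiv, LinearIsometryEquiv.preimage_sphere, map_zero]
      at this

end HausdorffMeasure

section TaylorCoefficients

open Complex Real Set
open scoped ComplexConjugate

variable {F : ℂ → ℂ}

/-- The Taylor coefficients of `F` at the origin. -/
noncomputable def taylorCoeff (F : ℂ → ℂ) (n : ℕ) : ℂ :=
  iteratedDeriv n F 0 / n.factorial

theorem taylorCoeff_zero (F : ℂ → ℂ) : taylorCoeff F 0 = F 0 := by simp [taylorCoeff]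

theorem taylorCoeff_deriv (F : ℂ → ℂ) (n : ℕ) :
    taylorCoeff (deriv F) n = (n + 1) * taylorCoeff F (n + 1) := by
  have : (n + 1 : ℂ) ≠ 0 := n.cast_add_one_ne_zero
  rw [taylorCoeff, taylorCoeff, iteratedDeriv_succ', Nat.factorial_succ]
  push_cast
  field_simp

theorem hasSum_taylorCoeff (hF : Differentiable ℂ F) (z : ℂ) :
    HasSum (fun n ↦ taylorCoeff F n * z ^ n) (F z) := by
  refine (hasSum_taylorSeries_of_entire hF 0 z).congr_fun fun n ↦ ?_
  simp only [taylorCoeff, sub_zero, smul_eq_mul]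
  ring

-- On the circle `conj z = r ^ 2 / z`, so this is Cauchy's formula for the derivatives.
theorem circleAverage_mul_conj_pow (hF : Differentiable ℂ F) {r : ℝ} (hr : 0 < r) (n : ℕ) :
    circleAverage (fun z ↦ F z * conj (z ^ n)) 0 r = taylorCoeff F n * r ^ (2 * n) := by
  have on_circle : EqOn (fun z ↦ F z * conj (z ^ n))
      (fun z ↦ (r : ℂ) ^ (2 * n) • ((z ^ n)⁻¹ * F z)) (sphere 0 |r|) := by
    intro z hz
    have hz : ‖z‖ = r := by simpa [abs_of_pos hr] using hz
    have hz0 : z ≠ 0 := norm_pos_iff.1 (hz ▸ hr)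
    have : (r : ℂ) ^ (2 * n) = conj z ^ n * z ^ n := by
      rw [← mul_pow, conj_mul', hz, pow_mul]
    simp only [map_pow, smul_eq_mul, this]
    field_simp
  have cauchy := hF.diffContOnCl (s := ball 0 r).circleIntegral_one_div_sub_center_pow_smul hr n
  simp only [sub_zero, one_div, pow_succ', smul_eq_mul, mul_inv, mul_assoc] at cauchy
  rw [circleAverage_congr_sphere on_circle, circleAverage_fun_smul,
    circleAverage_eq_circleIntegral hr.ne']
  simp only [sub_zero, smul_eq_mul, cauchy, taylorCoeff]
  field_simp [two_pi_I_ne_zero]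

theorem hasSum_norm_taylorCoeff_sq (hF : Differentiable ℂ F) {r : ℝ} (hr : 0 < r) :
    HasSum (fun n ↦ ‖taylorCoeff F n‖ ^ 2 * r ^ (2 * n))
      (circleAverage (fun z ↦ ‖F z‖ ^ 2) 0 r) := by
  have hcont := hF.continuous
  obtain ⟨C, hC⟩ := (isCompact_sphere (0 : ℂ) |r|).exists_bound_of_continuousOn hcont.continuousOn
  have termwise : HasSum
      (fun n ↦ ∫ θ in 0..2 * π, F (circleMap 0 r θ) * conj (taylorCoeff F n * circleMap 0 r θ ^ n))
      (∫ θ in 0..2 * π, F (circleMap 0 r θ) * conj (F (circleMap 0 r θ))) := by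
    refine intervalIntegral.hasSum_integral_of_dominated_convergence
      (fun n _ ↦ C * ‖taylorCoeff F n * (r : ℂ) ^ n‖)
      (fun n ↦ (by fun_prop : Continuous _).aestronglyMeasurable) (fun n ↦ ?_) ?_ (by simp) ?_
    · refine .of_forall fun θ _ ↦ ?_
      have := hC (circleMap 0 r θ) (by simp)
      simp only [norm_mul, norm_pow, RCLike.norm_conj, norm_circleMap_zero, norm_real,
        Real.norm_eq_abs]
      gcongr
    · exact .of_forall fun θ _ ↦ (hasSum_taylorCoeff hF r).summable.norm.mul_left C
    · exact .of_forall fun θ _ ↦ (hasSum_conj'.2 (by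
        simpa using hasSum_taylorCoeff hF (circleMap 0 r θ))).mul_left _
  have average (n : ℕ) : circleAverage (fun z ↦ F z * conj (taylorCoeff F n * z ^ n)) 0 r =
      ((‖taylorCoeff F n‖ ^ 2 * r ^ (2 * n) : ℝ) : ℂ) := by
    simp only [map_mul, mul_left_comm (F _)]
    simp only [← smul_eq_mul (conj (taylorCoeff F n))]
    rw [circleAverage_fun_smul, circleAverage_mul_conj_pow hF hr, smul_eq_mul, ← mul_assoc,
      conj_mul']
    push_cast
    rfl
  have total : ∫ θ in 0..2 * π, F (circleMap 0 r θ) * conj (F (circleMap 0 r θ)) =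
      ((∫ θ in 0..2 * π, ‖F (circleMap 0 r θ)‖ ^ 2 : ℝ) : ℂ) := by
    simp only [mul_conj', ← ofReal_pow, intervalIntegral.integral_ofReal]
  rw [← hasSum_ofReal]
  simp only [← average, circleAverage_def, smul_eq_mul, ofReal_mul, ← total]
  simpa only [real_smul] using termwise.const_smul ((2 * π)⁻¹ : ℝ)

theorem hasSum_mul_norm_taylorCoeff_sq (hF : Differentiable ℂ F) {r : ℝ} (hr : 0 ≤ r) :
    HasSum (fun n : ℕ ↦ n * (‖taylorCoeff F n‖ ^ 2 * r ^ (2 * n)))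
      (π⁻¹ * ∫ z in ball (0 : ℂ) r, ‖deriv F z‖ ^ 2) := by
  have hcont := hF.deriv.continuous
  let b (n : ℕ) : ℝ := ‖taylorCoeff (deriv F) n‖ ^ 2
  have parseval {s : ℝ} (hs : 0 < s) := hasSum_norm_taylorCoeff_sq hF.deriv hs
  have termwise : HasSum (fun n ↦ ∫ s in 0..r, 2 * π * s * (b n * s ^ (2 * n)))
      (∫ s in 0..r, 2 * π * s * circleAverage (fun z ↦ ‖deriv F z‖ ^ 2) 0 s) := by
    refine intervalIntegral.hasSum_integral_of_dominated_convergence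
      (fun n _ ↦ 2 * π * r * (b n * r ^ (2 * n)))
      (fun n ↦ (by fun_prop : Continuous _).aestronglyMeasurable) (fun n ↦ ?_) ?_ (by simp) ?_ <;>
    refine .of_forall fun s hs ↦ ?_ <;>
    obtain ⟨hs0, hsr⟩ := (uIoc_of_le hr ▸ hs : s ∈ Ioc 0 r)
    · rw [Real.norm_of_nonneg (by positivity)]
      gcongr
    · exact (parseval (hs0.trans_le hsr)).summable.mul_left _
    · exact (parseval hs0).mul_left _
  have moment (n : ℕ) : π⁻¹ * ∫ s in 0..r, 2 * π * s * (b n * s ^ (2 * n)) =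
      (n + 1 : ℕ) * (‖taylorCoeff F (n + 1)‖ ^ 2 * r ^ (2 * (n + 1))) := by
    have coeff : b n = (n + 1) ^ 2 * ‖taylorCoeff F (n + 1)‖ ^ 2 := by
      have : ‖(n + 1 : ℂ)‖ = n + 1 := mod_cast Complex.norm_natCast (n + 1)
      simp only [b, taylorCoeff_deriv, norm_mul, this, mul_pow]
    have integrand (s : ℝ) : 2 * π * s * (b n * s ^ (2 * n)) = 2 * π * b n * s ^ (2 * n + 1) := by
      ring
    simp only [integrand, intervalIntegral.integral_const_mul, integral_pow]
    rw [coeff]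
    push_cast
    field_simp
    ring
  rw [setIntegral_ball_eq_intervalIntegral_circleAverage (by fun_prop) 0 hr,
    ← hasSum_nat_add_iff' 1]
  simpa [moment] using termwise.mul_left π⁻¹

theorem circleAverage_re_sq (hF : Differentiable ℂ F) (hF0 : (F 0).im = 0) (r : ℝ) :
    circleAverage (fun z ↦ (F z).re ^ 2) 0 r =
      (circleAverage (fun z ↦ ‖F z‖ ^ 2) 0 r + ‖F 0‖ ^ 2) / 2 := by
  have hcont := hF.continuous
  have mean : circleAverage (fun z ↦ (F z ^ 2).re) 0 r = (F 0 ^ 2).re :=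
    (reCLM.circleAverage_comp_comm (hF.pow 2).continuous.continuousOn.circleIntegrable').trans
      (congrArg re (hF.pow 2).diffContOnCl.circleAverage)
  have pointwise (w : ℂ) : w.re ^ 2 = (1 / 2 : ℝ) • (‖w‖ ^ 2 + (w ^ 2).re) := by
    rw [Complex.sq_norm, normSq_apply, sq w, mul_re, smul_eq_mul]
    ring
  simp only [pointwise (F _)]
  rw [circleAverage_fun_smul, circleAverage_fun_add, mean, Complex.sq_norm, normSq_apply, sq (F 0),
    mul_re, hF0, smul_eq_mul]
  · ring
  · exact (by fun_prop : Continuous _).continuousOn.circleIntegrable'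
  · exact (continuous_re.comp (hcont.pow 2)).continuousOn.circleIntegrable'

end TaylorCoefficients

section PowerSeriesRatio

open Polynomial
open scoped Topology

theorem exists_polynomial_coeff_eq {R : Type*} [Semiring R] {b : ℕ → R}
    (hb : (Function.support b).Finite) : ∃ P : R[X], P.coeff = b :=
  ⟨⟨.ofCoeff (Finsupp.ofSupportFinite b hb)⟩, rfl⟩

theorem hasSum_coeff_mul_pow {R : Type*} [Semiring R] [TopologicalSpace R] (P : R[X]) (x : R) :
    HasSum (fun n ↦ P.coeff n * x ^ n) (P.eval x) := by
  rw [eval_eq_sum]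
  exact hasSum_sum_of_ne_finset_zero fun n hn ↦ by simp [notMem_support_iff.1 hn]

theorem tendsto_mul_eval_derivative_div_eval {𝕜 : Type*} [NormedField 𝕜] [LinearOrder 𝕜]
    [IsStrictOrderedRing 𝕜] [OrderTopology 𝕜] {P : 𝕜[X]} (hP : P ≠ 0) :
    Tendsto (fun x ↦ x * P.derivative.eval x / P.eval x) atTop (𝓝 P.natDegree) := by
  rcases P.natDegree.eq_zero_or_pos with h0 | hpos
  · simp [derivative_of_natDegree_zero h0, h0]
  have hlead : P.leadingCoeff ≠ 0 := leadingCoeff_ne_zero.2 hP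
  have hdeg : (X * derivative P).degree = P.degree := by
    rw [degree_mul, degree_X, degree_derivative hpos.ne', degree_eq_natDegree hP]
    exact_mod_cast Nat.add_sub_cancel' hpos
  simpa [mul_div_cancel_left₀ _ hlead] using
    div_tendsto_atTop_leadingCoeff_div_of_degree_eq _ _ hdeg

variable {b : ℕ → ℝ}

theorem eventually_mul_tsum_lt_tsum_mul (hb : ∀ n, 0 ≤ b n)
    (hs : ∀ x > 0, Summable fun n ↦ b n * x ^ n)
    (hs' : ∀ x > 0, Summable fun n : ℕ ↦ n * (b n * x ^ n))
    {c : ℝ} {m : ℕ} (hcm : c < m) (hbm : b m ≠ 0) :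
    ∀ᶠ x in atTop, c * ∑' n, b n * x ^ n < ∑' n : ℕ, n * (b n * x ^ n) := by
  set Q : ℝ[X] := ∑ n ∈ Finset.range (m + 1), monomial (n + 1) ((n - c) * b n) with hQ
  have hdeg : Q.natDegree = m + 1 := by
    refine natDegree_eq_of_le_of_coeff_ne_zero (natDegree_sum_le_of_forall_le _ _ fun n hn ↦ ?_) ?_
    · exact (natDegree_monomial_le _).trans (by simpa using hn)
    · simp [hQ, coeff_monomial, sub_eq_zero, hcm.ne', hbm]
  have hlead : 0 ≤ Q.leadingCoeff := by
    rw [leadingCoeff, hdeg]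
    simpa [hQ, coeff_monomial] using mul_nonneg (sub_nonneg.2 hcm.le) (hb m)
  have hpos := (tendsto_atTop_of_leadingCoeff_nonneg Q (natDegree_pos_iff_degree_pos.1 (by lia))
    hlead).eventually_gt_atTop 0
  filter_upwards [hpos, eventually_gt_atTop 0] with x hx hx0
  have initial : x * ∑ n ∈ Finset.range (m + 1), (n - c) * (b n * x ^ n) = Q.eval x := by
    rw [hQ, eval_finsetSum, Finset.mul_sum]
    exact Finset.sum_congr rfl fun n _ ↦ by rw [eval_monomial]; ring
  have hd : Summable fun n : ℕ ↦ (n - c) * (b n * x ^ n) := by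
    simpa only [sub_mul] using (hs' x hx0).sub ((hs x hx0).mul_left c)
  rw [← tsum_mul_left, ← sub_pos, ← (hs' x hx0).tsum_sub ((hs x hx0).mul_left c)]
  simp only [← sub_mul]
  refine (pos_of_mul_pos_right (initial ▸ hx) hx0.le).trans_le
    (hd.sum_le_tsum _ fun n hn ↦ ?_)
  have hmn : m < n := by simpa [Nat.lt_succ_iff] using hn
  have : c < n := hcm.trans (Nat.cast_lt.2 hmn)
  exact mul_nonneg (sub_nonneg.2 this.le) (mul_nonneg (hb n) (by positivity))

theorem exists_tendsto_tsum_ratio_iff {α : Type*} {l : Filter α} [l.NeBot] {x : α → ℝ}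
    (hx : Tendsto x l atTop) (hb : ∀ n, 0 ≤ b n) (hb0 : b ≠ 0)
    (hs : ∀ x > 0, Summable fun n ↦ b n * x ^ n)
    (hs' : ∀ x > 0, Summable fun n : ℕ ↦ n * (b n * x ^ n)) :
    (∃ L, Tendsto (fun t ↦ (∑' n : ℕ, n * (b n * x t ^ n)) / ∑' n, b n * x t ^ n) l (𝓝 L)) ↔
      (Function.support b).Finite := by
  constructor
  · rintro ⟨L, hL⟩
    by_contra hinf
    obtain ⟨m, hbm, hm⟩ := Set.Infinite.exists_gt hinf ⌈L + 1⌉₊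
    have hLm : L + 1 < m := (Nat.le_ceil _).trans_lt (Nat.cast_lt.2 hm)
    obtain ⟨t, hratio, hlt, ht⟩ := ((hL.eventually (gt_mem_nhds (lt_add_one L))).and
      ((hx.eventually (eventually_mul_tsum_lt_tsum_mul hb hs hs' hLm hbm)).and
        (hx.eventually_gt_atTop 0))).exists
    have hpos : 0 < ∑' n, b n * x t ^ n := (hs _ ht).tsum_pos
      (fun n ↦ mul_nonneg (hb n) (by positivity)) m
      (mul_pos ((hb m).lt_of_ne' hbm) (by positivity))
    exact lt_asymm ((div_lt_iff₀ hpos).1 hratio) hlt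
  · intro hfin
    obtain ⟨P, rfl⟩ := exists_polynomial_coeff_eq hfin
    have hP : P ≠ 0 := by rintro rfl; exact hb0 (by ext; simp)
    refine ⟨_, ((tendsto_mul_eval_derivative_div_eval hP).comp hx).congr fun t ↦ ?_⟩
    have hderiv : HasSum (fun n : ℕ ↦ n * (P.coeff n * x t ^ n))
        (x t * P.derivative.eval (x t)) := by
      have shift := (hasSum_coeff_mul_pow P.derivative (x t)).mul_left (x t)
      rw [← hasSum_nat_add_iff' 1]
      simpa [coeff_derivative, pow_succ', mul_left_comm, mul_assoc, mul_comm] using shift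
    rw [Function.comp_apply, hderiv.tsum_eq, (hasSum_coeff_mul_pow P (x t)).tsum_eq]

end PowerSeriesRatio

section Frequency

open Complex Real Set Polynomial
open scoped Topology

variable {F : ℂ → ℂ}

theorem support_taylorCoeff_finite_iff (hF : Differentiable ℂ F) :
    (Function.support (taylorCoeff F)).Finite ↔ ∃ P : ℂ[X], ∀ z, F z = P.eval z := by
  constructor
  · intro hfin
    obtain ⟨P, hP⟩ := exists_polynomial_coeff_eq hfin
    exact ⟨P, fun z ↦ (hasSum_taylorCoeff hF z).unique (hP ▸ hasSum_coeff_mul_pow P z)⟩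
  · rintro ⟨P, hP⟩
    obtain rfl : F = fun z ↦ P.eval z := funext hP
    have iterated (n : ℕ) : iteratedDeriv n (fun z ↦ P.eval z) =
        fun z ↦ (derivative^[n] P).eval z := by
      induction n with
      | zero => simp
      | succ n ih =>
        ext z
        rw [iteratedDeriv_succ, ih, Polynomial.deriv, Function.iterate_succ_apply']
    refine (Set.finite_Iic P.natDegree).subset fun n ↦ ?_
    contrapose!
    intro hn
    simp [taylorCoeff, iterated, iterate_derivative_eq_zero (not_le.1 hn)]

/-- The coefficients of `2 ⨍ (Re F)²` over the circle of radius `r`, expanded in powers of `r²`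
for `F 0` real. -/
noncomputable def heightCoeff (F : ℂ → ℂ) (n : ℕ) : ℝ :=
  ‖taylorCoeff F n‖ ^ 2 + if n = 0 then ‖F 0‖ ^ 2 else 0

theorem heightCoeff_nonneg (F : ℂ → ℂ) (n : ℕ) : 0 ≤ heightCoeff F n := by
  unfold heightCoeff
  positivity

theorem support_heightCoeff (F : ℂ → ℂ) :
    Function.support (heightCoeff F) = Function.support (taylorCoeff F) := by
  ext n
  rcases eq_or_ne n 0 with rfl | hn
  · simp [heightCoeff, taylorCoeff_zero]
  · simp [heightCoeff, hn]

theorem hasSum_heightCoeff (hF : Differentiable ℂ F) (hF0 : (F 0).im = 0) {r : ℝ} (hr : 0 < r) :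
    HasSum (fun n ↦ heightCoeff F n * (r ^ 2) ^ n)
      (2 * circleAverage (fun z ↦ (F z).re ^ 2) 0 r) := by
  have hzero : HasSum (fun n : ℕ ↦ (if n = 0 then ‖F 0‖ ^ 2 else 0) * (r ^ 2) ^ n) (‖F 0‖ ^ 2) := by
    convert hasSum_single 0 fun n hn ↦ ?_ using 1 <;> simp_all
  rw [circleAverage_re_sq hF hF0, mul_div_cancel₀ _ two_ne_zero]
  simp only [heightCoeff, add_mul]
  simpa only [pow_mul] using (hasSum_norm_taylorCoeff_sq hF hr).add hzero

theorem hasSum_mul_heightCoeff (hF : Differentiable ℂ F) {r : ℝ} (hr : 0 ≤ r) :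
    HasSum (fun n : ℕ ↦ n * (heightCoeff F n * (r ^ 2) ^ n))
      (π⁻¹ * ∫ z in ball (0 : ℂ) r, ‖deriv F z‖ ^ 2) := by
  have coeff (n : ℕ) : (n : ℝ) * heightCoeff F n = n * ‖taylorCoeff F n‖ ^ 2 := by
    rcases eq_or_ne n 0 with rfl | hn
    · simp
    · simp [heightCoeff, hn]
  simpa only [← mul_assoc, coeff, ← pow_mul] using hasSum_mul_norm_taylorCoeff_sq hF hr

theorem exists_tendsto_energy_div_height_iff (hF : Differentiable ℂ F) (hF0 : (F 0).im = 0)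
    (hne : F ≠ 0) :
    (∃ L, Tendsto (fun r : ℝ ↦ (∫ z in ball (0 : ℂ) r, ‖deriv F z‖ ^ 2) /
      circleAverage (fun z ↦ (F z).re ^ 2) 0 r) atTop (𝓝 L)) ↔
      ∃ P : ℂ[X], ∀ z, F z = P.eval z := by
  have height {r : ℝ} (hr : 0 < r) := hasSum_heightCoeff hF hF0 hr
  have energy {r : ℝ} (hr : 0 < r) := hasSum_mul_heightCoeff hF hr.le
  have hb0 : heightCoeff F ≠ 0 := by
    rw [← Function.support_nonempty_iff, support_heightCoeff, Function.support_nonempty_iff]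
    intro h
    exact hne (funext fun z ↦ (hasSum_taylorCoeff hF z).unique (by simp [h, hasSum_zero]))
  have ratio {r : ℝ} (hr : 0 < r) : (∑' n : ℕ, n * (heightCoeff F n * (r ^ 2) ^ n)) /
      ∑' n, heightCoeff F n * (r ^ 2) ^ n = (2 * π)⁻¹ * ((∫ z in ball (0 : ℂ) r, ‖deriv F z‖ ^ 2) /
        circleAverage (fun z ↦ (F z).re ^ 2) 0 r) := by
    rw [(height hr).tsum_eq, (energy hr).tsum_eq]
    field_simp
  rw [← support_taylorCoeff_finite_iff hF, ← support_heightCoeff,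
    ← exists_tendsto_tsum_ratio_iff (tendsto_pow_atTop two_ne_zero) (heightCoeff_nonneg F) hb0
      (fun x hx ↦ by simpa [hx.le] using (height (Real.sqrt_pos.2 hx)).summable)
      (fun x hx ↦ by simpa [hx.le] using (energy (Real.sqrt_pos.2 hx)).summable)]
  have eventually_ratio := (eventually_gt_atTop 0).mono fun r hr ↦ ratio hr
  rw [exists_congr fun L ↦ tendsto_congr' eventually_ratio]
  refine ⟨fun ⟨L, hL⟩ ↦ ⟨_, hL.const_mul (2 * π)⁻¹⟩, fun ⟨L, hL⟩ ↦ ⟨2 * π * L, ?_⟩⟩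
  simpa only [mul_inv_cancel_left₀ two_pi_pos.ne'] using hL.const_mul (2 * π)

end Frequency

section Components

open Set

variable {X : Type*} [TopologicalSpace X] {S : Set X}

theorem disjoint_frontier_connectedComponentIn [LocallyConnectedSpace X] (hS : IsOpen S) (x : X) :
    Disjoint (frontier (connectedComponentIn S x)) S := by
  refine disjoint_left.2 fun y hy hyS ↦ ?_
  have hmem := mem_connectedComponentIn hyS
  obtain ⟨z, hzy, hzx⟩ := mem_closure_iff.1 hy.1 _ hS.connectedComponentIn hmem
  rw [hS.connectedComponentIn.frontier_eq] at hy
  exact hy.2 (by rwa [connectedComponentIn_eq hzx, ← connectedComponentIn_eq hzy])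

theorem encard_components_meeting_path_le {γ : ℝ → X} (hγ : Continuous γ) {s : Set ℝ}
    (hs : s.OrdConnected) {Z : Finset ℝ} (hZ : ∀ θ ∈ s, γ θ ∉ S → θ ∈ Z) :
    {C ∈ nodalComponents S | (C ∩ γ '' s).Nonempty}.encard ≤ Z.card + 1 := by
  classical
  let crossed (θ : ℝ) : Finset ℝ := {ζ ∈ Z | ζ < θ}
  have same_component {a b : ℝ} (ha : a ∈ s) (hb : b ∈ s) (hbS : γ b ∈ S) (hab : a ≤ b)
      (hcard : (crossed a).card = (crossed b).card) :
      connectedComponentIn S (γ a) = connectedComponentIn S (γ b) := by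
    have heq : crossed a = crossed b :=
      Finset.eq_of_subset_of_card_le (fun ζ hζ ↦ by grind) hcard.ge
    have hsub : γ '' Icc a b ⊆ S := by
      rintro _ ⟨θ, hθ, rfl⟩
      by_contra hθS
      have hθb : θ < b := hθ.2.lt_of_ne (by rintro rfl; exact hθS hbS)
      have : θ ∈ crossed a := heq ▸ Finset.mem_filter.2 ⟨hZ θ (hs.out ha hb hθ) hθS, hθb⟩
      exact (Finset.mem_filter.1 this).2.not_ge hθ.1
    exact connectedComponentIn_eq <|
      (isPreconnected_Icc.image γ hγ.continuousOn).subset_connectedComponentIn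
        (mem_image_of_mem γ (left_mem_Icc.2 hab)) hsub (mem_image_of_mem γ (right_mem_Icc.2 hab))
  have hit (C : Set X) : ∃ θ, C ∈ nodalComponents S → (C ∩ γ '' s).Nonempty →
      θ ∈ s ∧ γ θ ∈ S ∧ connectedComponentIn S (γ θ) = C := by
    by_cases h : C ∈ nodalComponents S ∧ (C ∩ γ '' s).Nonempty
    · obtain ⟨⟨x, -, rfl⟩, _, hC, θ, hθ, rfl⟩ := h
      have hγS := connectedComponentIn_subset _ _ hC
      exact ⟨θ, fun _ _ ↦ ⟨hθ, hγS, (connectedComponentIn_eq hC).symm⟩⟩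
    · exact ⟨0, fun h₁ h₂ ↦ (h ⟨h₁, h₂⟩).elim⟩
  choose θ hθ using hit
  refine (encard_le_encard_of_injOn (f := fun C ↦ (crossed (θ C)).card)
    (t := (Finset.range (Z.card + 1) : Finset ℕ)) (fun C _ ↦ ?_) fun C hC D hD hCD ↦ ?_).trans ?_
  · simpa [Nat.lt_succ_iff] using Finset.card_filter_le Z _
  · obtain ⟨hCs, hCS, hC⟩ := hθ C hC.1 hC.2
    obtain ⟨hDs, hDS, hD⟩ := hθ D hD.1 hD.2
    rw [← hC, ← hD]
    rcases le_total (θ C) (θ D) with h | h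
    · exact same_component hCs hDs hDS h hCD
    · exact (same_component hDs hCs hCS h hCD.symm).symm
  · rw [encard_coe_eq_coe_finsetCard, Finset.card_range, Nat.cast_add_one]

end Components

section PolynomialComponents

open Complex Set Polynomial
open scoped ComplexConjugate Real

variable {F : ℂ → ℂ}

theorem isOpen_re_ne_zero (hF : Continuous F) : IsOpen {z | (F z).re ≠ 0} :=
  isOpen_ne_fun (continuous_re.comp hF) continuous_const

-- The maximum principle for `exp F` and `exp (-F)`, which have modulus `1` on the frontier.
theorem not_isBounded_connectedComponentIn_re_ne_zero (hF : Differentiable ℂ F) {z : ℂ}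
    (hz : (F z).re ≠ 0) :
    ¬ Bornology.IsBounded (connectedComponentIn {z | (F z).re ≠ 0} z) := by
  intro hbounded
  have hfrontier (x) (hx : x ∈ frontier (connectedComponentIn {z | (F z).re ≠ 0} z)) :
      (F x).re = 0 := not_not.1 <| disjoint_left.1
    (disjoint_frontier_connectedComponentIn (isOpen_re_ne_zero hF.continuous) z) hx
  have hmem := subset_closure (mem_connectedComponentIn (F := {z | (F z).re ≠ 0}) hz)
  have upper := norm_le_of_forall_mem_frontier_norm_le hbounded hF.cexp.diffContOnCl
    (C := 1) (fun x hx ↦ by simp [norm_exp, hfrontier x hx]) hmem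
  have lower := norm_le_of_forall_mem_frontier_norm_le hbounded hF.neg.cexp.diffContOnCl
    (C := 1) (fun x hx ↦ by simp [norm_exp, hfrontier x hx]) hmem
  simp only [norm_exp, Real.exp_le_one_iff, Pi.neg_apply, neg_re] at upper lower
  exact hz (by linarith)

theorem connectedComponentIn_re_ne_zero_inter_sphere_nonempty (hF : Differentiable ℂ F) {z : ℂ}
    (hz : (F z).re ≠ 0) {R : ℝ} (hR : ‖z‖ ≤ R) :
    (connectedComponentIn {z | (F z).re ≠ 0} z ∩ sphere 0 R).Nonempty := by
  obtain ⟨y, hy, hyR⟩ : ∃ y ∈ connectedComponentIn {z | (F z).re ≠ 0} z, R ≤ ‖y‖ := by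
    by_contra! h
    exact not_isBounded_connectedComponentIn_re_ne_zero hF hz
      (isBounded_iff_forall_norm_le.2 ⟨R, fun x hx ↦ (h x hx).le⟩)
  obtain ⟨w, hw, hwR⟩ := isPreconnected_connectedComponentIn.intermediate_value
    (mem_connectedComponentIn hz) hy continuous_norm.continuousOn ⟨hR, hyR⟩
  exact ⟨w, hw, by simpa using hwR⟩

-- On the circle `conj z = R ^ 2 / z`, so `2 z ^ n Re P(z)` is a polynomial in `z`.
theorem exists_polynomial_eval_eq_pow_mul_re_on_sphere (P : ℂ[X]) {R : ℝ} (hR : 0 < R) :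
    ∃ Q : ℂ[X], Q.natDegree ≤ 2 * P.natDegree ∧
      ∀ z ∈ sphere (0 : ℂ) R, Q.eval z = z ^ P.natDegree * (2 * (P.eval z).re : ℝ) := by
  set n := P.natDegree
  set S : ℂ[X] := (P.map (starRingEnd ℂ)).comp (C (R ^ 2 : ℂ) * X) with hS
  have hSdeg : S.natDegree ≤ n := by
    refine natDegree_comp_le.trans ((Nat.mul_le_mul natDegree_map_le
      (natDegree_C_mul_le _ _)).trans (by simp [n]))
  refine ⟨X ^ n * P + reflect n S, natDegree_add_le_of_degree_le ?_ ?_, fun z hz ↦ ?_⟩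
  · exact natDegree_mul_le.trans (by simp [two_mul, n])
  · exact natDegree_reflect_le.trans (by lia)
  have hnorm : ‖z‖ = R := by simpa using hz
  have hz0 : z ≠ 0 := norm_pos_iff.1 (hnorm ▸ hR)
  let := invertibleOfNonzero (inv_ne_zero hz0)
  have reflected := eval₂_reflect_mul_pow (RingHom.id ℂ) z⁻¹ n S hSdeg
  have conj_z : (R ^ 2 : ℂ) * z⁻¹ = conj z := by
    rw [← hnorm, ← conj_mul', mul_inv_cancel_right₀ hz0]
  rw [invOf_eq_inv, inv_inv, eval₂_id, eval₂_id, hS, eval_comp, eval_mul, eval_C, eval_X, conj_z,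
    eval_map_apply, ← hS, inv_pow, ← div_eq_mul_inv, div_eq_iff (pow_ne_zero n hz0)] at reflected
  rw [eval_add, eval_mul, eval_pow, eval_X, reflected, ← add_conj]
  ring

theorem encard_sphere_inter_re_eval_eq_zero_le (P : ℂ[X]) {R : ℝ} (hR : 0 < R) {w : ℂ}
    (hw : w ∈ sphere 0 R) (hPw : (P.eval w).re ≠ 0) :
    (sphere 0 R ∩ {z | (P.eval z).re = 0}).encard ≤ 2 * P.natDegree := by
  obtain ⟨Q, hdeg, hQ⟩ := exists_polynomial_eval_eq_pow_mul_re_on_sphere P hR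
  have hw0 : w ≠ 0 := ne_of_mem_sphere hw hR.ne'
  have hQ0 : Q ≠ 0 := by
    rintro rfl
    have := hQ w hw
    simp_all
  have hroots : sphere 0 R ∩ {z | (P.eval z).re = 0} ⊆ (Q.roots.toFinset : Set ℂ) := by
    rintro z ⟨hz, hre : (P.eval z).re = 0⟩
    simp [hQ0, hQ z hz, hre]
  refine (encard_le_encard hroots).trans ?_
  rw [encard_coe_eq_coe_finsetCard]
  exact_mod_cast (Multiset.toFinset_card_le _).trans ((card_roots' Q).trans hdeg)

theorem encard_components_meeting_sphere_le (P : ℂ[X]) {R : ℝ} (hR : 0 < R) {w : ℂ}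
    (hw : w ∈ sphere 0 R) (hPw : (P.eval w).re ≠ 0) :
    {C ∈ nodalComponents {z | (P.eval z).re ≠ 0} | (C ∩ sphere 0 R).Nonempty}.encard ≤
      2 * P.natDegree + 1 := by
  let Z : Set ℝ := {θ ∈ Ioc 0 (2 * π) | (P.eval (circleMap 0 R θ)).re = 0}
  have card_Z : Z.encard ≤ 2 * P.natDegree := by
    have maps : MapsTo (circleMap 0 R) Z (sphere 0 R ∩ {z | (P.eval z).re = 0}) :=
      fun θ hθ ↦ ⟨circleMap_mem_sphere 0 hR.le θ, hθ.2⟩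
    have inj : InjOn (circleMap 0 R) Z :=
      (injOn_circleMap_of_abs_sub_le (a := 0) (b := 2 * π) hR.ne'
        (by simp [abs_of_pos Real.pi_pos])).mono
        fun θ hθ ↦ by simpa only [uIoc_of_le Real.two_pi_pos.le] using hθ.1
    exact (encard_le_encard_of_injOn maps inj).trans
      (encard_sphere_inter_re_eval_eq_zero_le P hR hw hPw)
  have finite_Z : Z.Finite := finite_of_encard_le_coe (k := 2 * P.natDegree) (mod_cast card_Z)
  rw [finite_Z.encard_eq_coe_toFinset_card] at card_Z
  have bound := encard_components_meeting_path_le (continuous_circleMap 0 R) ordConnected_Ioc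
    (S := {z | (P.eval z).re ≠ 0}) (s := Ioc 0 (2 * π)) (Z := finite_Z.toFinset)
    fun θ hθ hzero ↦ finite_Z.mem_toFinset.2 ⟨hθ, not_not.1 hzero⟩
  rw [image_circleMap_Ioc, abs_of_pos hR] at bound
  exact bound.trans (by gcongr)

theorem finite_nodalComponents_re_eval (P : ℂ[X]) :
    (nodalComponents {z | (P.eval z).re ≠ 0}).Finite := by
  by_contra hinf
  obtain ⟨T, hT, hcard⟩ := Set.Infinite.exists_subset_card_eq hinf (2 * P.natDegree + 2)
  have representative (C) (hC : C ∈ T) : ∃ x, (P.eval x).re ≠ 0 ∧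
      connectedComponentIn {z | (P.eval z).re ≠ 0} x = C := hT hC
  choose! x hx hxC using representative
  obtain ⟨R, hR⟩ := (T.image fun C ↦ ‖x C‖).bddAbove
  have meets {C} (hC : C ∈ T) : (C ∩ sphere 0 (max R 1)).Nonempty := by
    have hCR : ‖x C‖ ≤ R := hR (Finset.mem_coe.2 (Finset.mem_image_of_mem _ hC))
    nth_rw 1 [← hxC C hC]
    exact connectedComponentIn_re_ne_zero_inter_sphere_nonempty P.differentiable (hx C hC)
      (hCR.trans (le_max_left R 1))
  obtain ⟨C, hC⟩ : T.Nonempty := Finset.card_pos.1 (by lia)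
  obtain ⟨w, hwC, hw⟩ := meets hC
  rw [← hxC C hC] at hwC
  have subset : (T : Set (Set ℂ)) ⊆ {C ∈ nodalComponents {z | (P.eval z).re ≠ 0} |
      (C ∩ sphere 0 (max R 1)).Nonempty} := fun C hC ↦ ⟨hT hC, meets hC⟩
  have bound := (encard_le_encard subset).trans
    (encard_components_meeting_sphere_le P (by positivity) hw (connectedComponentIn_subset _ _ hwC))
  rw [encard_coe_eq_coe_finsetCard, hcard] at bound
  norm_cast at bound
  lia

end PolynomialComponents

section UnboundedComponents

open Set Bornology

variable {E : Type*} [NormedAddCommGroup E] [NormedSpace ℝ E]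

theorem isPreconnected_setOf_lt_norm (hE : 1 < Module.rank ℝ E) {r : ℝ} (hr : 0 ≤ r) :
    IsPreconnected {x : E | r < ‖x‖} := by
  have hprod : IsPreconnected (Ioi r ×ˢ sphere (0 : E) 1) :=
    isPreconnected_Ioi.prod (isPreconnected_sphere hE 0 1)
  convert hprod.image (fun p : ℝ × E ↦ p.1 • p.2) (by fun_prop) using 1
  ext x
  constructor
  · intro hx
    have hx0 : ‖x‖ ≠ 0 := (hr.trans_lt hx).ne'
    exact ⟨(‖x‖, ‖x‖⁻¹ • x), ⟨hx, by simp [norm_smul, hx0]⟩, by simp [hx0]⟩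
  · rintro ⟨⟨t, y⟩, ⟨ht, hy⟩, rfl⟩
    have hy : ‖y‖ = 1 := by simpa using hy
    simpa [norm_smul, hy, abs_of_pos (hr.trans_lt ht)] using ht

theorem connectedComponentIn_compl_eq_of_not_isBounded (hE : 1 < Module.rank ℝ E) {K : Set E}
    (hK : IsBounded K) {x y : E} (hx : ¬ IsBounded (connectedComponentIn Kᶜ x))
    (hy : ¬ IsBounded (connectedComponentIn Kᶜ y)) :
    connectedComponentIn Kᶜ x = connectedComponentIn Kᶜ y := by
  obtain ⟨r, hr, hKr⟩ := hK.exists_pos_norm_le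
  have houter : {z : E | r < ‖z‖} ⊆ Kᶜ := fun z hz hzK ↦ (hKr z hzK).not_gt hz
  have meets {x : E} (hx : ¬ IsBounded (connectedComponentIn Kᶜ x)) :
      ∃ p ∈ connectedComponentIn Kᶜ x, r < ‖p‖ := by
    by_contra! h
    exact hx (isBounded_iff_forall_norm_le.2 ⟨r, h⟩)
  obtain ⟨p, hpx, hp⟩ := meets hx
  obtain ⟨q, hqy, hq⟩ := meets hy
  rw [connectedComponentIn_eq hpx, connectedComponentIn_eq hqy]
  exact connectedComponentIn_eq <|
    (isPreconnected_setOf_lt_norm hE hr.le).subset_connectedComponentIn hp houter hq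

end UnboundedComponents

section ContinuousLogarithms

open Complex Set
open scoped Real Topology

theorem sub_eq_sub_of_exp_eq_exp {X : Type*} [TopologicalSpace X] {K : Set X}
    (hK : IsPreconnected K) {f g : X → ℂ} (hf : ContinuousOn f K) (hg : ContinuousOn g K)
    (hexp : ∀ z ∈ K, exp (f z) = exp (g z)) {x y : X} (hx : x ∈ K) (hy : y ∈ K) :
    f x - f y = g x - g y := by
  have hcountable : ((f - g) '' K).Countable := by
    refine (countable_range fun n : ℤ ↦ (n : ℂ) * (2 * π * I)).mono ?_
    rintro _ ⟨z, hz, rfl⟩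
    obtain ⟨n, hn⟩ := exp_eq_exp_iff_exists_int.1 (hexp z hz)
    exact ⟨n, by simp [hn]⟩
  have hconst := hcountable.isTotallyDisconnected _ subset_rfl (hK.image _ (hf.sub hg))
    (mem_image_of_mem _ hx) (mem_image_of_mem _ hy)
  rw [Pi.sub_apply, Pi.sub_apply] at hconst
  linear_combination hconst

theorem exists_continuousOn_exp_eq_div_of_norm_sub_lt {K : Set ℂ} {a b : ℂ}
    (hab : ∀ z ∈ K, ‖a - b‖ < ‖z - b‖) :
    ∃ L : ℂ → ℂ, ContinuousOn L K ∧ ∀ z ∈ K, exp (L z) = (z - a) / (z - b) := by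
  have hne (z) (hz : z ∈ K) : z - b ≠ 0 :=
    norm_pos_iff.1 ((norm_nonneg _).trans_lt (hab z hz))
  have hslit (z) (hz : z ∈ K) : (z - a) / (z - b) ∈ slitPlane := by
    have hsmall : ‖-((a - b) / (z - b))‖ < 1 := by
      rw [norm_neg, norm_div, div_lt_one (norm_pos_iff.2 (hne z hz))]
      exact hab z hz
    convert mem_slitPlane_of_norm_lt_one hsmall using 1
    field_simp [hne z hz]
    ring
  refine ⟨fun z ↦ log ((z - a) / (z - b)), .clog (.div ?_ ?_ hne) hslit,
    fun z hz ↦ exp_log (slitPlane_ne_zero (hslit z hz))⟩ <;> fun_prop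

theorem exists_continuousOn_exp_eq_div {K : Set ℂ} (hK : IsClosed K) {a b : ℂ} (ha : a ∉ K)
    (hb : b ∈ connectedComponentIn Kᶜ a) :
    ∃ L : ℂ → ℂ, ContinuousOn L K ∧ ∀ z ∈ K, exp (L z) = (z - a) / (z - b) := by
  have off {p z : ℂ} (hp : p ∈ connectedComponentIn Kᶜ a) (hz : z ∈ K) : z - p ≠ 0 :=
    sub_ne_zero.2 fun h ↦ connectedComponentIn_subset _ _ hp (h ▸ hz)
  refine isPreconnected_connectedComponentIn.induction₂
    (fun p q ↦ ∃ L : ℂ → ℂ, ContinuousOn L K ∧ ∀ z ∈ K, exp (L z) = (z - p) / (z - q))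
    (fun p hp ↦ ?_) ?_ ?_ (mem_connectedComponentIn ha) hb
  · obtain ⟨ε, hε, hball⟩ := Metric.isOpen_iff.1 hK.isOpen_compl p
      (connectedComponentIn_subset _ _ hp)
    filter_upwards [mem_nhdsWithin_of_mem_nhds (ball_mem_nhds p (half_pos hε))] with q hq
    refine exists_continuousOn_exp_eq_div_of_norm_sub_lt fun z hz ↦ ?_
    rw [mem_ball'] at hq
    have hpz : ε ≤ dist p z := by
      by_contra! hlt
      exact hball (mem_ball'.2 hlt) hz
    rw [← dist_eq_norm, ← dist_eq_norm, dist_comm z]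
    linarith [dist_triangle p q z]
  · rintro p q s _ hq _ ⟨L, hL, hLexp⟩ ⟨M, hM, hMexp⟩
    refine ⟨L + M, hL.add hM, fun z hz ↦ ?_⟩
    rw [Pi.add_apply, exp_add, hLexp z hz, hMexp z hz, div_mul_div_cancel₀ (off hq hz)]
  · rintro p q - - ⟨L, hL, hLexp⟩
    exact ⟨-L, hL.neg, fun z hz ↦ by rw [Pi.neg_apply, exp_neg, hLexp z hz, inv_div]⟩

theorem div_add_I_mul_re (z : ℂ) (η : ℝ) :
    ((z - I * η) / (z + I * η)).re = (‖z‖ ^ 2 - η ^ 2) / normSq (z + I * η) := by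
  rw [div_re, ← add_div, ← normSq_eq_norm_sq, normSq_apply z]
  congr 1
  simp
  ring

theorem div_add_I_mul_im (z : ℂ) (η : ℝ) :
    ((z - I * η) / (z + I * η)).im = -(2 * η * z.re) / normSq (z + I * η) := by
  rw [div_im, ← sub_div]
  congr 1
  simp
  ring

theorem add_I_mul_ne_zero {z : ℂ} {η : ℝ} (hη : 0 < η) (hz : η ≠ ‖z‖) : z + I * η ≠ 0 := by
  rintro h
  rw [eq_neg_of_add_eq_zero_left h] at hz
  simp [abs_of_pos hη] at hz

theorem div_add_I_mul_mem_slitPlane {z : ℂ} {η : ℝ} (hη : 0 < η) (hz : η < ‖z‖) :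
    (z - I * η) / (z + I * η) ∈ slitPlane := by
  refine .inl ?_
  rw [div_add_I_mul_re]
  exact div_pos (sub_pos.2 (pow_lt_pow_left₀ hz hη.le two_ne_zero))
    (normSq_pos.2 (add_I_mul_ne_zero hη hz.ne))

theorem ofReal_add_I_mul_ne_zero {η : ℝ} (hη : 0 < η) (x : ℝ) : (x : ℂ) + I * η ≠ 0 :=
  fun h ↦ hη.ne' (by simpa using congrArg im h)

theorem neg_ofReal_div_add_I_mul_mem_slitPlane {η : ℝ} (hη : 0 < η) (x : ℝ) :
    -((x - I * η) / (x + I * η)) ∈ slitPlane := by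
  have hnormSq := normSq_pos.2 (ofReal_add_I_mul_ne_zero hη x)
  rcases eq_or_ne x 0 with rfl | hx
  · refine .inl ?_
    rw [neg_re, div_add_I_mul_re, ← neg_div]
    exact div_pos (by simpa using pow_pos hη 2) hnormSq
  · refine .inr ?_
    rw [neg_im, div_add_I_mul_im, neg_ne_zero]
    exact div_ne_zero (by simp [hη.ne', hx]) hnormSq.ne'

theorem arg_sub_arg_div_add_I_mul_lt {η δ : ℝ} (hη : 0 < η) (hδ : 0 < δ) {q : ℂ → ℂ}
    (hq : ∀ z, q z = (z - I * η) / (z + I * η)) :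
    (q δ).arg - (q (-δ : ℝ)).arg < (-q δ).arg - (-q (-δ : ℝ)).arg := by
  have him (x : ℝ) : (q x).im = -(2 * η * x) / normSq (x + I * η) := by
    rw [hq, div_add_I_mul_im, ofReal_re]
  have im_pos : (q δ).im < 0 := by
    rw [him, neg_div, neg_lt_zero]
    exact div_pos (by positivity) (normSq_pos.2 (ofReal_add_I_mul_ne_zero hη _))
  have im_neg : 0 < (q (-δ : ℝ)).im := by
    rw [him, mul_neg, neg_neg]
    exact div_pos (by positivity) (normSq_pos.2 (ofReal_add_I_mul_ne_zero hη _))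
  have h₁ : (q δ).arg < 0 := arg_neg_iff.2 im_pos
  have h₂ : 0 ≤ (q (-δ : ℝ)).arg := arg_nonneg_iff.2 im_neg.le
  have h₃ : 0 ≤ (-q δ).arg := arg_nonneg_iff.2 (by rw [neg_im]; linarith)
  have h₄ : (-q (-δ : ℝ)).arg < 0 := arg_neg_iff.2 (by rw [neg_im]; linarith)
  linarith

/- The quotient `(z - iη) / (z + iη)` would have a continuous logarithm on `K ∪ [-δ, δ]`. It stays
off the negative axis on `K` and off the positive axis on `[-δ, δ]`, so the two routes from `-δ` to
`δ` change its argument by different amounts. -/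
theorem notMem_connectedComponentIn_compl_union_segment {K : Set ℂ} (hK : IsClosed K)
    (hKconn : IsPreconnected K) {η δ : ℝ} (hη : 0 < η) (hδ : 0 < δ) (hKη : ∀ z ∈ K, η < ‖z‖)
    (hpos : (δ : ℂ) ∈ K) (hneg : ((-δ : ℝ) : ℂ) ∈ K) :
    -(I * η) ∉ connectedComponentIn (K ∪ ofReal '' Icc (-δ) δ)ᶜ (I * η) := by
  intro hmem
  set J : Set ℂ := ofReal '' Icc (-δ) δ
  have hJ : IsClosed J := (isCompact_Icc.image continuous_ofReal).isClosed
  have hJconn : IsPreconnected J := isPreconnected_Icc.image _ continuous_ofReal.continuousOn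
  obtain ⟨L, hL, hLexp⟩ := exists_continuousOn_exp_eq_div (hK.union hJ)
    (connectedComponentIn_nonempty_iff.1 ⟨_, hmem⟩) hmem
  simp only [sub_neg_eq_add] at hLexp
  set q : ℂ → ℂ := fun z ↦ (z - I * η) / (z + I * η) with hq
  have hden (z) (hz : z ∈ K ∪ J) : z + I * η ≠ 0 := fun h ↦
    exp_ne_zero _ ((hLexp z hz).trans (by simp [h]))
  have hqcont : ContinuousOn q (K ∪ J) := .div (by fun_prop) (by fun_prop) hden
  have slit_K (z) (hz : z ∈ K) : q z ∈ slitPlane := div_add_I_mul_mem_slitPlane hη (hKη z hz)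
  have slit_J (z) (hz : z ∈ J) : -q z ∈ slitPlane := by
    obtain ⟨x, -, rfl⟩ := hz
    exact neg_ofReal_div_add_I_mul_mem_slitPlane hη x
  have along_K : L δ - L (-δ : ℝ) = log (q δ) - log (q (-δ : ℝ)) :=
    sub_eq_sub_of_exp_eq_exp hKconn (g := fun z ↦ log (q z)) (hL.mono subset_union_left)
      ((hqcont.mono subset_union_left).clog slit_K)
      (fun z hz ↦ by rw [hLexp z (.inl hz), exp_log (slitPlane_ne_zero (slit_K z hz))]) hpos hneg
  have along_J : (L δ + π * I) - (L (-δ : ℝ) + π * I) = log (-q δ) - log (-q (-δ : ℝ)) :=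
    sub_eq_sub_of_exp_eq_exp hJconn (f := fun z ↦ L z + π * I) (g := fun z ↦ log (-q z))
      ((hL.mono subset_union_right).add continuousOn_const)
      ((hqcont.mono subset_union_right).neg.clog slit_J)
      (fun z hz ↦ by
        rw [exp_add, exp_pi_mul_I, hLexp z (.inr hz), exp_log (slitPlane_ne_zero (slit_J z hz)),
          mul_neg_one])
      (mem_image_of_mem _ ⟨by linarith, le_rfl⟩) (mem_image_of_mem _ ⟨le_rfl, by linarith⟩)
  rw [add_sub_add_right_eq_sub, along_K] at along_J
  have same_turn := congrArg im along_J
  simp only [sub_im, log_im] at same_turn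
  exact (arg_sub_arg_div_add_I_mul_lt hη hδ fun z ↦ congrFun hq z).ne same_turn

end ContinuousLogarithms

section NodalArcs

open Bornology Complex Set
open scoped Topology

theorem subset_image_of_disjoint_image_frontier {X Y : Type*} [TopologicalSpace X]
    [TopologicalSpace Y] [T2Space Y] {G : X → Y} {C : Set X} {T : Set Y} (hT : IsPreconnected T)
    (hG : ContinuousOn G (closure C)) (hC : IsCompact (closure C)) (hGC : IsOpen (G '' C))
    (hfrontier : Disjoint T (G '' frontier C)) (hmeet : (T ∩ G '' C).Nonempty) : T ⊆ G '' C := by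
  refine hT.subset_left_of_subset_union hGC (hC.image_of_continuousOn hG).isClosed.isOpen_compl
    (disjoint_compl_right.mono_left (image_mono subset_closure)) (fun y hy ↦ ?_) hmeet
  by_cases hyC : y ∈ G '' closure C
  · rw [closure_eq_self_union_frontier, image_union] at hyC
    exact .inl (hyC.resolve_right (disjoint_left.1 hfrontier hy))
  · exact .inr hyC

theorem not_isBounded_image_smul_Ioi {E : Type*} [NormedAddCommGroup E] [NormedSpace ℝ E] {v : E}
    (hv : v ≠ 0) : ¬ IsBounded ((fun t : ℝ ↦ t • v) '' Ioi 0) := by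
  intro hb
  obtain ⟨M, hM, hle⟩ := hb.exists_pos_norm_le
  have hv : 0 < ‖v‖ := norm_pos_iff.2 hv
  have := hle _ (mem_image_of_mem _ (show (M + 1) / ‖v‖ ∈ Ioi 0 from mem_Ioi.2 (by positivity)))
  rw [norm_smul, Real.norm_of_nonneg (by positivity), div_mul_cancel₀ _ hv.ne'] at this
  linarith

variable {F G : ℂ → ℂ} {δ : ℝ} {K : Set ℂ}

/- The open half-line from `0` through `G z` would avoid the image of the boundary of the component,
hence stay in the image of the component, which is bounded. -/
theorem not_isBounded_connectedComponentIn_of_re_eq_zero (hG : Differentiable ℂ G) (hG0 : G 0 = 0)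
    (hK : IsCompact K) (hGK : ∀ z ∈ K, (G z).re = 0 → G z = 0) {z : ℂ} (hz : z ∉ K)
    (hre : (G z).re = 0) (hne : G z ≠ 0) : ¬ IsBounded (connectedComponentIn Kᶜ z) := by
  intro hb
  set C := connectedComponentIn Kᶜ z
  have hcompact : IsCompact (closure C) := hb.isCompact_closure
  have hopen : IsOpen (G '' C) := by
    have han : AnalyticOnNhd ℂ G univ := fun z _ ↦ hG.analyticAt z
    refine han.is_constant_or_isOpenMap.resolve_left ?_ C
      hK.isClosed.isOpen_compl.connectedComponentIn
    rintro ⟨c, hc⟩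
    exact hne (by rw [hc, ← hc 0, hG0])
  have hfrontier : Disjoint ((fun t : ℝ ↦ t • G z) '' Ioi 0) (G '' frontier C) := by
    refine disjoint_left.2 ?_
    rintro _ ⟨t, ht, rfl⟩ ⟨x, hx, hxt⟩
    have hxK : x ∈ K := not_notMem.1 <| disjoint_left.1
      (disjoint_frontier_connectedComponentIn hK.isClosed.isOpen_compl z) hx
    have hzero : t • G z = 0 := hxt.symm.trans (hGK x hxK (by simp [hxt, hre]))
    exact smul_ne_zero (ne_of_gt ht) hne hzero
  have hray := subset_image_of_disjoint_image_frontier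
    (isPreconnected_Ioi.image _ (by fun_prop)) hG.continuous.continuousOn hcompact hopen hfrontier
    ⟨G z, ⟨1, by simp, by simp⟩, z, mem_connectedComponentIn hz, rfl⟩
  exact not_isBounded_image_smul_Ioi hne
    ((hcompact.image hG.continuous).isBounded.subset (hray.trans (image_mono subset_closure)))

/-- The open half of the disc of radius `δ` about `0` on the side of `σ * I`, for `σ = ±1`. -/
def halfDisc (σ δ : ℝ) : Set ℂ := {z | 0 < σ * z.im} ∩ ball 0 δ

theorem convex_halfDisc (σ δ : ℝ) : Convex ℝ (halfDisc σ δ) :=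
  (convex_halfSpace_gt (σ • imLm).isLinear 0).inter (convex_ball 0 δ)

theorem mul_I_mul_mem_halfDisc {σ η : ℝ} (hσ : σ ^ 2 = 1) (hη : 0 < η) (hηδ : η < δ) :
    σ * (I * η) ∈ halfDisc σ δ := by
  have hσ_abs : |σ| = 1 := by rwa [← sq_eq_sq₀ (abs_nonneg σ) zero_le_one, sq_abs, one_pow]
  refine ⟨?_, ?_⟩
  · simpa [← mul_assoc, ← sq, hσ]
  · simpa [hσ_abs, abs_of_pos hη]

/-- `G` is within half the norm of the identity on the closed disc of radius `δ > 0` about `0`. It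
is the quantitative form of `G 0 = 0`, `deriv G 0 = 1` used to follow the zero set of `Re G` near
`0`. -/
structure IsNearIdOn (G : ℂ → ℂ) (δ : ℝ) : Prop where
  pos : 0 < δ
  norm_sub_le : ∀ z, ‖z‖ ≤ δ → ‖G z - z‖ ≤ ‖z‖ / 2

namespace IsNearIdOn

theorem mono {δ' : ℝ} (h : IsNearIdOn G δ) (hδ' : 0 < δ') (hle : δ' ≤ δ) : IsNearIdOn G δ' :=
  ⟨hδ', fun z hz ↦ h.norm_sub_le z (hz.trans hle)⟩

theorem map_zero (h : IsNearIdOn G δ) : G 0 = 0 := by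
  simpa using h.norm_sub_le 0 (by simpa using h.pos.le)

theorem ne_zero (h : IsNearIdOn G δ) {z : ℂ} (hz : ‖z‖ ≤ δ) (hz0 : z ≠ 0) : G z ≠ 0 := by
  intro h0
  have := h.norm_sub_le z hz
  rw [h0, zero_sub, norm_neg] at this
  linarith [norm_pos_iff.2 hz0]

theorem re_pos (h : IsNearIdOn G δ) {z : ℂ} (hz : ‖z‖ ≤ δ) (hre : ‖z‖ / 2 < z.re) :
    0 < (G z).re := by
  have := (abs_le.1 ((abs_re_le_norm _).trans (h.norm_sub_le z hz))).1
  rw [sub_re] at this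
  linarith

theorem re_neg (h : IsNearIdOn G δ) {z : ℂ} (hz : ‖z‖ ≤ δ) (hre : z.re < -(‖z‖ / 2)) :
    (G z).re < 0 := by
  have := (abs_le.1 ((abs_re_le_norm _).trans (h.norm_sub_le z hz))).2
  rw [sub_re] at this
  linarith

theorem re_ofReal_ne_zero (h : IsNearIdOn G δ) {t : ℝ} (ht : |t| ≤ δ) (ht0 : t ≠ 0) :
    (G t).re ≠ 0 := by
  rw [← Real.norm_eq_abs, ← norm_real] at ht
  rcases ht0.lt_or_gt with hneg | hpos
  · refine (h.re_neg ht ?_).ne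
    rw [norm_real, Real.norm_of_nonpos hneg.le, ofReal_re]
    linarith
  · refine (h.re_pos ht ?_).ne'
    rw [norm_real, Real.norm_of_nonneg hpos.le, ofReal_re]
    linarith

/- The points `(δ / 2) * (±4 + 3 σ i) / 5` lie in the half-disc, close enough to the real axis for
`Re G` to have the sign of `Re z` there. -/
theorem exists_mem_halfDisc_re_eq_zero (h : IsNearIdOn G δ) (hG : Continuous G) {σ : ℝ}
    (hσ : σ ^ 2 = 1) : ∃ z ∈ halfDisc σ δ, (G z).re = 0 ∧ G z ≠ 0 := by
  have hδ := h.pos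
  let p (s : ℝ) : ℂ := ⟨4 * s * δ / 10, 3 * σ * δ / 10⟩
  have norm_p {s : ℝ} (hs : s ^ 2 = 1) : ‖p s‖ = δ / 2 := by
    rw [← sq_eq_sq₀ (norm_nonneg _) (by positivity), ← normSq_eq_norm_sq, normSq_apply]
    linear_combination (16 / 100) * δ ^ 2 * hs + (9 / 100) * δ ^ 2 * hσ
  have p_mem {s : ℝ} (hs : s ^ 2 = 1) : p s ∈ halfDisc σ δ := by
    refine ⟨?_, mem_ball_zero_iff.2 (by linarith [norm_p hs])⟩
    change 0 < σ * (3 * σ * δ / 10)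
    linear_combination -(3 / 10) * δ * hσ + (3 / 10) * hδ
  have hone : (1 : ℝ) ^ 2 = 1 := one_pow 2
  have hneg_one : (-1 : ℝ) ^ 2 = 1 := neg_one_sq
  have pos : 0 < (G (p 1)).re := by
    refine h.re_pos (by linarith [norm_p hone]) ?_
    change ‖p 1‖ / 2 < 4 * 1 * δ / 10
    linarith [norm_p hone]
  have neg : (G (p (-1))).re < 0 := by
    refine h.re_neg (by linarith [norm_p hneg_one]) ?_
    change 4 * -1 * δ / 10 < -(‖p (-1)‖ / 2)
    linarith [norm_p hneg_one]
  obtain ⟨z, hz, hz0⟩ := (convex_halfDisc σ δ).isPreconnected.intermediate_value (p_mem hneg_one)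
    (p_mem hone) (continuous_re.comp hG).continuousOn ⟨neg.le, pos.le⟩
  refine ⟨z, hz, hz0, h.ne_zero (mem_ball_zero_iff.1 hz.2).le ?_⟩
  rintro rfl
  simpa using hz.1

theorem not_isBounded_connectedComponentIn_compl_union_segment (h : IsNearIdOn G δ)
    (hG : Differentiable ℂ G) (hK : IsCompact K) (hGK : ∀ z ∈ K, (G z).re = 0 → G z = 0)
    (hKδ : ∀ z ∈ K, δ ≤ ‖z‖) {σ : ℝ} (hσ : σ ^ 2 = 1) :
    ¬ IsBounded (connectedComponentIn (K ∪ ofReal '' Icc (-δ) δ)ᶜ (σ * (I * (δ / 2 : ℝ)))) := by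
  set J : Set ℂ := ofReal '' Icc (-δ) δ
  have hKJ : IsCompact (K ∪ J) := hK.union (isCompact_Icc.image continuous_ofReal)
  have hGKJ : ∀ z ∈ K ∪ J, (G z).re = 0 → G z = 0 := by
    rintro z (hz | ⟨t, ht, rfl⟩) hre
    · exact hGK z hz hre
    · obtain rfl : t = 0 := of_not_not fun ht0 ↦ h.re_ofReal_ne_zero (abs_le.2 ht) ht0 hre
      exact h.map_zero
  have halfDisc_subset : halfDisc σ δ ⊆ (K ∪ J)ᶜ := by
    rintro z ⟨hz, hzδ⟩ (hzK | ⟨t, -, rfl⟩)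
    · exact (hKδ z hzK).not_gt (mem_ball_zero_iff.1 hzδ)
    · simp at hz
  obtain ⟨z, hz, hre, hne⟩ := h.exists_mem_halfDisc_re_eq_zero hG.continuous hσ
  have hsame := (convex_halfDisc σ δ).isPreconnected.subset_connectedComponentIn hz halfDisc_subset
    (mul_I_mul_mem_halfDisc hσ (half_pos h.pos) (half_lt_self h.pos))
  rw [← connectedComponentIn_eq hsame]
  exact not_isBounded_connectedComponentIn_of_re_eq_zero hG h.map_zero hKJ hGKJ
    (halfDisc_subset hz) hre hne

theorem exists_re_eq_zero_of_le_norm (h : IsNearIdOn G δ) (hG : Differentiable ℂ G)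
    (hK : IsCompact K) (hKconn : IsPreconnected K) (hKδ : ∀ z ∈ K, δ ≤ ‖z‖) (hpos : (δ : ℂ) ∈ K)
    (hneg : ((-δ : ℝ) : ℂ) ∈ K) : ∃ z ∈ K, (G z).re = 0 ∧ G z ≠ 0 := by
  by_contra! hGK
  have hδ := h.pos
  have unbounded {σ : ℝ} (hσ : σ ^ 2 = 1) :=
    h.not_isBounded_connectedComponentIn_compl_union_segment hG hK hGK hKδ hσ
  have hbounded : IsBounded (K ∪ ofReal '' Icc (-δ) δ) :=
    (hK.union (isCompact_Icc.image continuous_ofReal)).isBounded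
  have hsame := connectedComponentIn_compl_eq_of_not_isBounded (by simp) hbounded
    (unbounded (one_pow 2)) (unbounded neg_one_sq)
  refine notMem_connectedComponentIn_compl_union_segment hK.isClosed hKconn (half_pos hδ) hδ
    (fun z hz ↦ (half_lt_self hδ).trans_le (hKδ z hz)) hpos hneg ?_
  have hmem : ((-1 : ℝ) : ℂ) * (I * (δ / 2 : ℝ)) ∈ (K ∪ ofReal '' Icc (-δ) δ)ᶜ :=
    connectedComponentIn_nonempty_iff.1 <| nonempty_iff_ne_empty.2 fun hempty ↦
      unbounded neg_one_sq (hempty ▸ isBounded_empty)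
  have hcomponent := mem_connectedComponentIn hmem
  rw [← hsame] at hcomponent
  simpa using hcomponent

/- Shrinking `δ` below the distance from `0` to `K` and joining the new endpoints to `±δ` by real
segments reduces to the previous case. -/
theorem exists_re_eq_zero_of_isPreconnected (h : IsNearIdOn G δ) (hG : Differentiable ℂ G)
    (hK : IsCompact K) (hKconn : IsPreconnected K) (h0 : 0 ∉ K) (hpos : (δ : ℂ) ∈ K)
    (hneg : ((-δ : ℝ) : ℂ) ∈ K) : ∃ z ∈ K, (G z).re = 0 ∧ G z ≠ 0 := by
  obtain ⟨ε, hε, hball⟩ := Metric.isOpen_iff.1 hK.isClosed.isOpen_compl 0 h0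
  obtain ⟨δ', hδ', hδ'ε, hδ'δ⟩ : ∃ δ' > 0, δ' ≤ ε ∧ δ' ≤ δ :=
    ⟨min ε δ, lt_min hε h.pos, min_le_left _ _, min_le_right _ _⟩
  let right : Set ℂ := ofReal '' Icc δ' δ
  let left : Set ℂ := ofReal '' Icc (-δ) (-δ')
  have segment_conn (a b : ℝ) : IsPreconnected (ofReal '' Icc a b) :=
    isPreconnected_Icc.image _ continuous_ofReal.continuousOn
  have segment_compact (a b : ℝ) : IsCompact (ofReal '' Icc a b) :=
    isCompact_Icc.image continuous_ofReal
  have segments_le (z) (hz : z ∈ right ∪ left) : ∃ t : ℝ, t = z ∧ δ' ≤ |t| ∧ |t| ≤ δ := by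
    rcases hz with ⟨t, ⟨hlow, hupp⟩, rfl⟩ | ⟨t, ⟨hlow, hupp⟩, rfl⟩
    · exact ⟨t, rfl, by rw [abs_of_pos] <;> linarith, by rw [abs_of_pos] <;> linarith⟩
    · exact ⟨t, rfl, by rw [abs_of_neg] <;> linarith, by rw [abs_of_neg] <;> linarith⟩
  have extended_conn : IsPreconnected (K ∪ right ∪ left) :=
    (hKconn.union _ hpos (mem_image_of_mem _ (right_mem_Icc.2 hδ'δ)) (segment_conn _ _)).union _
      (.inl hneg) (mem_image_of_mem _ (left_mem_Icc.2 (neg_le_neg hδ'δ))) (segment_conn _ _)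
  obtain ⟨z, hz, hre, hne⟩ := (h.mono hδ' hδ'δ).exists_re_eq_zero_of_le_norm hG
    ((hK.union (segment_compact _ _)).union (segment_compact _ _)) extended_conn
    (fun z hz ↦ by
      rw [union_assoc] at hz
      rcases hz with hz | hz
      · by_contra! hlt
        exact hball (mem_ball_zero_iff.2 (hlt.trans_le hδ'ε)) hz
      · obtain ⟨t, rfl, hle, -⟩ := segments_le z hz
        rwa [norm_real])
    (.inl (.inr (mem_image_of_mem _ ⟨le_rfl, hδ'δ⟩)))
    (.inr (mem_image_of_mem _ ⟨neg_le_neg hδ'δ, le_rfl⟩))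
  rw [union_assoc] at hz
  refine ⟨z, hz.resolve_right fun hz ↦ ?_, hre, hne⟩
  obtain ⟨t, rfl, hle, hle'⟩ := segments_le z hz
  exact h.re_ofReal_ne_zero hle' (abs_pos.1 (hδ'.trans_le hle)) hre

end IsNearIdOn

/-- The function `z ↦ F (a + z / deriv F a) - F a`, which is tangent to the identity at `0` when
`deriv F a ≠ 0`. -/
noncomputable def normalizedAt (F : ℂ → ℂ) (a z : ℂ) : ℂ := F (a + z / deriv F a) - F a

theorem differentiable_normalizedAt (hF : Differentiable ℂ F) (a : ℂ) :
    Differentiable ℂ (normalizedAt F a) := by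
  unfold normalizedAt
  fun_prop

theorem re_normalizedAt {a : ℂ} (ha : (F a).re = 0) (z : ℂ) :
    (normalizedAt F a z).re = (F (a + z / deriv F a)).re := by
  rw [normalizedAt, sub_re, ha, sub_zero]

theorem exists_isNearIdOn_normalizedAt {a : ℂ} (ha : deriv F a ≠ 0) :
    ∃ δ, IsNearIdOn (normalizedAt F a) δ := by
  have hderiv : HasDerivAt (normalizedAt F a) 1 0 := by
    have hinner : HasDerivAt (fun z ↦ a + z / deriv F a) (1 / deriv F a) 0 :=
      ((hasDerivAt_id 0).div_const _).const_add a
    have houter : HasDerivAt F (deriv F a) (a + 0 / deriv F a) := by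
      simpa using (differentiableAt_of_deriv_ne_zero ha).hasDerivAt
    have := (houter.comp (0 : ℂ) hinner).sub_const (F a)
    rwa [mul_one_div_cancel ha] at this
  obtain ⟨ε, hε, hle⟩ := Metric.eventually_nhds_iff.1
    ((hasDerivAt_iff_isLittleO.1 hderiv).def (one_half_pos (α := ℝ)))
  refine ⟨ε / 2, half_pos hε, fun z hz ↦ ?_⟩
  have := hle (y := z) (by rw [dist_zero_right]; linarith)
  simpa [normalizedAt, div_eq_inv_mul] using this

theorem exists_isCompact_isPreconnected_subset {X : Type*} [TopologicalSpace X]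
    [LocallyPathConnectedSpace X] {S : Set X} (hS : IsOpen S) {x y : X} (hx : x ∈ S)
    (hy : y ∈ connectedComponentIn S x) :
    ∃ γ ⊆ S, IsCompact γ ∧ IsPreconnected γ ∧ x ∈ γ ∧ y ∈ γ := by
  have hpath : IsPathConnected (connectedComponentIn S x) :=
    hS.connectedComponentIn.isConnected_iff_isPathConnected.1
      (isConnected_connectedComponentIn_iff.2 hx)
  obtain ⟨p, hp⟩ := hpath.joinedIn x (mem_connectedComponentIn hx) y hy
  exact ⟨range p, range_subset_iff.2 fun t ↦ connectedComponentIn_subset _ _ (hp t),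
    isCompact_range p.continuous, isPreconnected_range p.continuous, ⟨0, p.source⟩, ⟨1, p.target⟩⟩

/-- The nodal component of `Re F` that contains `a + t / deriv F a`. When `Re F a = 0` and
`deriv F a ≠ 0`, small `t > 0` and small `t < 0` give the two components meeting at `a` with `Re F`
positive, respectively negative. -/
def sideComponent (F : ℂ → ℂ) (a : ℂ) (t : ℝ) : Set ℂ :=
  connectedComponentIn {z | (F z).re ≠ 0} (a + t / deriv F a)

namespace IsNearIdOn

variable {a b x y : ℂ}

theorem re_side_ne_zero (h : IsNearIdOn (normalizedAt F a) δ) (ha : (F a).re = 0) {t : ℝ}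
    (ht : |t| ≤ δ) (ht0 : t ≠ 0) : (F (a + t / deriv F a)).re ≠ 0 :=
  re_normalizedAt ha t ▸ h.re_ofReal_ne_zero ht ht0

theorem exists_isPreconnected_through (h : IsNearIdOn (normalizedAt F a) δ) (hF : Continuous F)
    (ha : (F a).re = 0) (hx : x ∈ sideComponent F a δ) (hy : y ∈ sideComponent F a (-δ)) :
    ∃ Γ, IsCompact Γ ∧ IsPreconnected Γ ∧ x ∈ Γ ∧ y ∈ Γ ∧ ∀ z ∈ Γ, (F z).re = 0 → z = a := by
  have hδ := h.pos
  have hδ_abs : |δ| ≤ δ := (abs_of_pos hδ).le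
  obtain ⟨γ₁, hγ₁, compact₁, conn₁, start₁, hxγ₁⟩ := exists_isCompact_isPreconnected_subset
    (isOpen_re_ne_zero hF) (h.re_side_ne_zero ha hδ_abs hδ.ne') hx
  obtain ⟨γ₂, hγ₂, compact₂, conn₂, start₂, hyγ₂⟩ := exists_isCompact_isPreconnected_subset
    (isOpen_re_ne_zero hF) (h.re_side_ne_zero ha (by rwa [abs_neg]) (neg_ne_zero.2 hδ.ne')) hy
  let segment : Set ℂ := (fun t : ℝ ↦ a + t / deriv F a) '' Icc (-δ) δ
  have hcont : Continuous fun t : ℝ ↦ a + t / deriv F a := by fun_prop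
  have end₁ : a + δ / deriv F a ∈ segment := ⟨δ, ⟨by linarith, le_rfl⟩, rfl⟩
  have end₂ : a + (-δ : ℝ) / deriv F a ∈ segment := ⟨-δ, ⟨le_rfl, by linarith⟩, rfl⟩
  refine ⟨γ₁ ∪ segment ∪ γ₂, (compact₁.union (isCompact_Icc.image hcont)).union compact₂,
    (conn₁.union _ start₁ end₁ (isPreconnected_Icc.image _ hcont.continuousOn)).union _
      (.inr end₂) start₂ conn₂, .inl (.inl hxγ₁), .inr hyγ₂, ?_⟩
  rintro z ((hz | ⟨t, ht, rfl⟩) | hz) hre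
  · exact absurd hre (hγ₁ hz)
  · obtain rfl : t = 0 := of_not_not fun ht0 ↦ h.re_side_ne_zero ha (abs_le.2 ht) ht0 hre
    simp
  · exact absurd hre (hγ₂ hz)

theorem eq_of_sideComponent_eq {δ' : ℝ} (hF : Differentiable ℂ F)
    (ha : IsNearIdOn (normalizedAt F a) δ) (hb : IsNearIdOn (normalizedAt F b) δ')
    (ha' : deriv F a ≠ 0) (hre : (F a).re = 0) (hab : F a = F b)
    (hpos : sideComponent F a δ = sideComponent F b δ')
    (hneg : sideComponent F a (-δ) = sideComponent F b (-δ')) : a = b := by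
  by_contra hne
  have mem_side {t : ℝ} (ht : |t| ≤ δ) (ht0 : t ≠ 0) : a + t / deriv F a ∈ sideComponent F a t :=
    mem_connectedComponentIn (ha.re_side_ne_zero hre ht ht0)
  have hδ := ha.pos
  have hδ_abs : |δ| ≤ δ := (abs_of_pos hδ).le
  obtain ⟨Γ, hΓ, Γconn, posΓ, negΓ, hzero⟩ := hb.exists_isPreconnected_through hF.continuous
    (hab ▸ hre) (hpos ▸ mem_side hδ_abs hδ.ne')
    (hneg ▸ mem_side (by rwa [abs_neg]) (neg_ne_zero.2 hδ.ne'))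
  let φ (w : ℂ) : ℂ := (w - a) * deriv F a
  have normalizedAt_φ (w : ℂ) : normalizedAt F a (φ w) = F w - F a := by
    simp [normalizedAt, φ, mul_div_cancel_right₀ _ ha']
  have hφ : Continuous φ := by fun_prop
  have φ_side (t : ℝ) : φ (a + t / deriv F a) = t := by simp [φ, ha']
  have zero_notMem : 0 ∉ φ '' Γ := by
    rintro ⟨w, hw, hw0⟩
    obtain rfl : w = a := sub_eq_zero.1 ((mul_eq_zero_iff_right ha').1 hw0)
    exact hne (hzero w hw hre)
  obtain ⟨_, ⟨w, hw, rfl⟩, hwre, hwne⟩ := ha.exists_re_eq_zero_of_isPreconnected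
    (differentiable_normalizedAt hF a) (hΓ.image hφ) (Γconn.image _ hφ.continuousOn) zero_notMem
    ⟨_, posΓ, φ_side δ⟩ ⟨_, negΓ, φ_side (-δ)⟩
  rw [normalizedAt_φ, sub_re, hre, sub_zero] at hwre
  rw [normalizedAt_φ, hzero w hw hwre, hab] at hwne
  exact hwne (sub_self _)

end IsNearIdOn

theorem encard_simple_solutions_le (hF : Differentiable ℂ F) {w : ℂ} (hw : w.re = 0) :
    {z | F z = w ∧ deriv F z ≠ 0}.encard ≤ (nodalComponents {z | (F z).re ≠ 0}).encard ^ 2 := by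
  choose! δ hδ using fun z (hz : deriv F z ≠ 0) ↦ exists_isNearIdOn_normalizedAt hz
  let sides (z : ℂ) : Set ℂ × Set ℂ := (sideComponent F z (δ z), sideComponent F z (-δ z))
  have maps : MapsTo sides {z | F z = w ∧ deriv F z ≠ 0}
      (nodalComponents {z | (F z).re ≠ 0} ×ˢ nodalComponents {z | (F z).re ≠ 0}) := by
    rintro z ⟨rfl, hz⟩
    have hpos := (hδ z hz).pos
    have habs : |δ z| ≤ δ z := (abs_of_pos hpos).le
    exact ⟨⟨_, (hδ z hz).re_side_ne_zero hw habs hpos.ne', rfl⟩,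
      ⟨_, (hδ z hz).re_side_ne_zero hw (by rwa [abs_neg]) (neg_ne_zero.2 hpos.ne'), rfl⟩⟩
  have inj : InjOn sides {z | F z = w ∧ deriv F z ≠ 0} := by
    rintro z ⟨rfl, hz⟩ z' ⟨hz'w, hz'⟩ hsides
    exact IsNearIdOn.eq_of_sideComponent_eq hF (hδ z hz) (hδ z' hz') hz hw hz'w.symm
      (congrArg Prod.fst hsides) (congrArg Prod.snd hsides)
  exact (encard_le_encard_of_injOn maps inj).trans_eq (by rw [encard_prod, sq])

end NodalArcs

section FibreCounting

open Complex Set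
open scoped Topology

theorem eventually_encard_le_encard_inter_fibre {X Y : Type*} [TopologicalSpace X] [T2Space X]
    [TopologicalSpace Y] {f : X → Y} {y₀ : Y} {T V : Set X} (hT : T.Finite)
    (hf : ∀ x ∈ T, 𝓝 y₀ ≤ map f (𝓝 x)) (hV : ∀ x ∈ T, V ∈ 𝓝 x) :
    ∀ᶠ y in 𝓝 y₀, T.encard ≤ (V ∩ f ⁻¹' {y}).encard := by
  obtain ⟨U, hU, disj⟩ := hT.t2_separation
  have hit : ∀ᶠ y in 𝓝 y₀, ∀ x ∈ T, ∃ x' ∈ U x ∩ V, f x' = y :=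
    hT.eventually_all.2 fun x hx ↦
      hf x hx (image_mem_map (inter_mem ((hU x).2.mem_nhds (hU x).1) (hV x hx)))
  filter_upwards [hit] with y hy
  choose! g hg hgy using hy
  refine encard_le_encard_of_injOn (fun x hx ↦ ⟨(hg x hx).2, hgy x hx⟩) fun x hx x' hx' h ↦ ?_
  exact disj.elim_set hx hx' (g x) (hg x hx).1 (h ▸ (hg x' hx').1)

variable {F : ℂ → ℂ} {A : Set ℂ}

-- Simple solutions persist under perturbation of `w`, so none can come from infinity near a value
-- of `w` for which their number is maximal.
theorem exists_eventually_simple_solutions_subset_ball (hF : Differentiable ℂ F)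
    (hA : A.Nonempty) {M : ℕ} (hM : ∀ w ∈ A, {z | F z = w ∧ deriv F z ≠ 0}.encard ≤ M) :
    ∃ w₀ ∈ A, ∃ R, ∀ᶠ w in 𝓝[A] w₀, {z | F z = w ∧ deriv F z ≠ 0} ⊆ ball 0 R := by
  let S (w : ℂ) : Set ℂ := {z | F z = w ∧ deriv F z ≠ 0}
  have count_lt_top : sSup ((fun w ↦ (S w).encard) '' A) < ⊤ :=
    (sSup_le (forall_mem_image.2 hM)).trans_lt (ENat.natCast_lt_top M)
  obtain ⟨w₀, hw₀, hmax⟩ := (hA.image _).csSup_mem (ENat.finite_of_sSup_lt_top count_lt_top)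
  have count_le {w : ℂ} (hw : w ∈ A) : (S w).encard ≤ (S w₀).encard :=
    (le_sSup (mem_image_of_mem _ hw)).trans_eq hmax.symm
  have hfin : (S w₀).Finite := encard_lt_top_iff.1 (hmax.trans_lt count_lt_top)
  obtain ⟨R, hR⟩ := hfin.isBounded.subset_ball 0
  have hopen : IsOpen (ball 0 R ∩ {z | deriv F z ≠ 0}) :=
    isOpen_ball.inter (isOpen_ne_fun hF.deriv.continuous continuous_const)
  have near : ∀ᶠ w in 𝓝 w₀,
      (S w₀).encard ≤ (ball 0 R ∩ {z | deriv F z ≠ 0} ∩ F ⁻¹' {w}).encard := by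
    refine eventually_encard_le_encard_inter_fibre hfin (fun z hz ↦ ?_)
      fun z hz ↦ hopen.mem_nhds ⟨hR hz, hz.2⟩
    have hstrict := (hF.analyticAt z).hasStrictDerivAt
    rw [hstrict.map_nhds_eq hz.2, hz.1]
  refine ⟨w₀, hw₀, R, ?_⟩
  filter_upwards [near.filter_mono nhdsWithin_le_nhds, self_mem_nhdsWithin] with w hw hwA
  have hsub : ball 0 R ∩ {z | deriv F z ≠ 0} ∩ F ⁻¹' {w} ⊆ S w := fun z hz ↦ ⟨hz.2, hz.1.2⟩
  have hfin' : (S w).Finite := encard_lt_top_iff.1 ((hM w hwA).trans_lt (ENat.natCast_lt_top M))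
  have heq := (hfin'.subset hsub).eq_of_subset_of_encard_le hsub ((count_le hwA).trans hw)
  exact fun z hz ↦ (heq.ge hz).1.1

theorem exists_mem_deriv_ne_zero_of_accPt (hF : Differentiable ℂ F) (hF' : deriv F ≠ 0) {z : ℂ}
    {V : Set ℂ} (hV : V ∈ 𝓝 z) (hA : AccPt (F z) (𝓟 A)) :
    ∃ z' ∈ V, F z' ∈ A ∧ deriv F z' ≠ 0 := by
  have critical_isolated : ∀ᶠ x in 𝓝[≠] z, deriv F x ≠ 0 := by
    refine (hF.deriv.analyticAt z).eventually_eq_zero_or_eventually_ne_zero.resolve_left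
      fun h ↦ hF' ?_
    exact AnalyticOnNhd.eq_of_eventuallyEq (fun x _ ↦ hF.deriv.analyticAt x)
      (fun x _ ↦ analyticAt_const) h
  have openMap : 𝓝 (F z) ≤ map F (𝓝 z) := by
    refine (hF.analyticAt z).eventually_constant_or_nhds_le_map_nhds.resolve_left fun h ↦ hF' ?_
    have hconst : F = fun _ ↦ F z := AnalyticOnNhd.eq_of_eventuallyEq
      (fun x _ ↦ hF.analyticAt x) (fun x _ ↦ analyticAt_const) h
    rw [hconst]
    exact funext fun x ↦ deriv_const x (F z)
  have regular : ∀ᶠ x in 𝓝 z, x ≠ z → deriv F x ≠ 0 := eventually_nhdsWithin_iff.1 critical_isolated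
  obtain ⟨_, ⟨⟨x, hx, rfl⟩, hxA⟩, hne⟩ :=
    accPt_iff_nhds.1 hA _ (openMap (image_mem_map (inter_mem hV regular)))
  exact ⟨x, hx.1, hxA, hx.2 fun h ↦ hne (h ▸ rfl)⟩

theorem exists_eventually_fibre_subset_closedBall (hF : Differentiable ℂ F) (hF' : deriv F ≠ 0)
    (hA : A.Nonempty) (hA' : Preperfect A) {M : ℕ}
    (hM : ∀ w ∈ A, {z | F z = w ∧ deriv F z ≠ 0}.encard ≤ M) :
    ∃ w₀ ∈ A, ∃ R, ∀ᶠ w in 𝓝[A] w₀, F ⁻¹' {w} ⊆ closedBall 0 R := by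
  obtain ⟨w₀, hw₀, R, hR⟩ := exists_eventually_simple_solutions_subset_ball hF hA hM
  refine ⟨w₀, hw₀, R, ?_⟩
  rw [eventually_nhdsWithin_iff] at hR ⊢
  filter_upwards [hR.eventually_nhds] with w hw hwA z hz
  by_contra hzR
  obtain rfl : F z = w := hz
  obtain ⟨z', ⟨hz'w, hz'R⟩, hz'A, hz'⟩ := exists_mem_deriv_ne_zero_of_accPt hF hF'
    (inter_mem (hF.continuous.continuousAt.eventually hw)
      (isClosed_closedBall.isOpen_compl.mem_nhds hzR)) (hA' _ hwA)
  exact hz'R (ball_subset_closedBall (hz'w hz'A ⟨rfl, hz'⟩))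

end FibreCounting

section OmittedSegment

open Bornology Complex Set Polynomial
open scoped Topology

theorem div_sub_mem_slitPlane_of_notMem_segment {a b w : ℂ} (hw : w ∉ segment ℝ a b) :
    (w - a) / (w - b) ∈ slitPlane := by
  have hwb : w - b ≠ 0 := sub_ne_zero.2 fun h ↦ hw (h ▸ right_mem_segment ℝ a b)
  rw [mem_slitPlane_iff_not_le_zero]
  intro hle
  obtain ⟨t, ht, hteq⟩ : ∃ t : ℝ, t ≤ 0 ∧ (t : ℂ) = (w - a) / (w - b) :=
    ⟨_, (Complex.le_def.1 hle).1, Complex.ext rfl (Complex.le_def.1 hle).2.symm⟩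
  have hline : (t : ℂ) * (w - b) = w - a := (eq_div_iff hwb).1 hteq
  have ht1 : 1 - t ≠ 0 := by linarith
  have ht1' : (1 - t : ℂ) ≠ 0 := mod_cast ht1
  refine hw ⟨1 / (1 - t), -t / (1 - t), by bound, by bound, by field_simp; ring, ?_⟩
  simp only [real_smul]
  push_cast
  field_simp
  linear_combination hline

theorem re_exp_half_log_pos {z : ℂ} (hz : z ∈ slitPlane) : 0 < (exp (log z / 2)).re := by
  have hlt := (arg_le_pi z).lt_of_ne (slitPlane_arg_ne_pi hz)
  have hgt := neg_pi_lt_arg z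
  rw [exp_re, div_ofNat_im, log_im]
  exact mul_pos (Real.exp_pos _) (Real.cos_pos_of_mem_Ioo ⟨by linarith, by linarith⟩)

theorem meromorphicAt_of_isBoundedUnder {f : ℂ → ℂ} {c : ℂ}
    (hd : ∀ᶠ z in 𝓝[≠] c, DifferentiableAt ℂ f z)
    (hb : IsBoundedUnder (· ≤ ·) (𝓝[≠] c) (‖f ·‖)) : MeromorphicAt f c := by
  obtain ⟨C, hC⟩ := hb
  have hs := eventually_nhdsWithin_iff.1 (hd.and (eventually_map.1 hC))
  have hdiff := Complex.differentiableOn_update_limUnder_of_bddAbove hs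
    (fun z hz ↦ (hz.1 hz.2).1.differentiableWithinAt)
    ⟨C, forall_mem_image.2 fun z hz ↦ (hz.1 hz.2).2⟩
  refine (hdiff.analyticAt hs).meromorphicAt.congr ?_
  filter_upwards [self_mem_nhdsWithin] with z hz using Function.update_of_ne hz _ _

-- A square root of `(f - a) / (f - b)` lies in the right half-plane, which a Möbius map takes into
-- the unit disc; so Riemann's removable singularity theorem applies.
theorem meromorphicAt_of_notMem_segment {f : ℂ → ℂ} {a b c : ℂ} (hab : a ≠ b)
    (hd : ∀ᶠ z in 𝓝[≠] c, DifferentiableAt ℂ f z)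
    (hf : ∀ᶠ z in 𝓝[≠] c, f z ∉ segment ℝ a b) : MeromorphicAt f c := by
  let s (z : ℂ) : ℂ := exp (log ((f z - a) / (f z - b)) / 2)
  have s_sq {z : ℂ} (hz : f z ∉ segment ℝ a b) : s z ^ 2 = (f z - a) / (f z - b) := by
    rw [← exp_nat_mul, Nat.cast_ofNat, mul_div_cancel₀ _ two_ne_zero,
      exp_log (slitPlane_ne_zero (div_sub_mem_slitPlane_of_notMem_segment hz))]
  have one_add_s {z : ℂ} (hz : f z ∉ segment ℝ a b) : 1 ≤ ‖1 + s z‖ := by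
    refine le_trans ?_ (re_le_norm _)
    rw [add_re, one_re]
    linarith [re_exp_half_log_pos (div_sub_mem_slitPlane_of_notMem_segment hz)]
  have s_diff : ∀ᶠ z in 𝓝[≠] c, DifferentiableAt ℂ (fun z ↦ (1 + s z)⁻¹) z := by
    filter_upwards [hd, hf] with z hdz hfz
    have hb : f z - b ≠ 0 := sub_ne_zero.2 fun h ↦ hfz (h ▸ right_mem_segment ℝ a b)
    have hlog := ((hdz.sub_const a).div (hdz.sub_const b) hb).clog
      (div_sub_mem_slitPlane_of_notMem_segment hfz)
    exact ((hlog.div_const 2).cexp.const_add 1).inv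
      (norm_pos_iff.1 (one_pos.trans_le (one_add_s hfz)))
  have hmero : MeromorphicAt (fun z ↦ (1 + s z)⁻¹) c := by
    refine meromorphicAt_of_isBoundedUnder s_diff ⟨1, eventually_map.2 ?_⟩
    filter_upwards [hf] with z hz
    rw [norm_inv]
    exact inv_le_one_of_one_le₀ (one_add_s hz)
  have s_mero : MeromorphicAt s c := by
    refine (hmero.inv.sub (MeromorphicAt.const 1 c)).congr (.of_forall fun z ↦ ?_)
    simp
  refine (((MeromorphicAt.const a c).sub ((MeromorphicAt.const b c).mul (s_mero.pow 2))).div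
    ((MeromorphicAt.const 1 c).sub (s_mero.pow 2))).congr ?_
  filter_upwards [hf] with z hz
  have hb : f z - b ≠ 0 := sub_ne_zero.2 fun h ↦ hz (h ▸ right_mem_segment ℝ a b)
  have : b - a ≠ 0 := sub_ne_zero.2 hab.symm
  simp only [Pi.div_apply, Pi.sub_apply, Pi.mul_apply, Pi.pow_apply, s_sq hz]
  rw [one_sub_div hb, sub_sub_sub_cancel_left]
  field_simp
  ring

theorem eventually_norm_le_mul_norm_pow {F : ℂ → ℂ} (hF : MeromorphicAt (fun z ↦ F z⁻¹) 0) :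
    ∃ C : ℝ, ∃ n : ℕ, ∀ᶠ z in cobounded ℂ, ‖F z‖ ≤ C * ‖z‖ ^ n := by
  obtain ⟨n, hn⟩ := hF
  obtain ⟨C, hC⟩ := hn.continuousAt.norm.isBoundedUnder_le
  refine ⟨C, n, ?_⟩
  filter_upwards [tendsto_inv₀_cobounded.eventually (eventually_map.1 hC),
    eventually_ne_cobounded (0 : ℂ)] with z hz hz0
  simp only [sub_zero, inv_inv, norm_smul, norm_pow, norm_inv] at hz
  rwa [inv_pow, inv_mul_le_iff₀ (by positivity), mul_comm] at hz

theorem taylorCoeff_eq_zero_of_growth {F : ℂ → ℂ} (hF : Differentiable ℂ F) {C : ℝ} {m n : ℕ}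
    (hmn : m < n) (hgrowth : ∀ᶠ z in cobounded ℂ, ‖F z‖ ≤ C * ‖z‖ ^ m) : taylorCoeff F n = 0 := by
  rw [← comap_norm_atTop, eventually_comap] at hgrowth
  have cauchy : ∀ᶠ R : ℝ in atTop, ‖taylorCoeff F n‖ ≤ C * (R ^ m / R ^ n) := by
    filter_upwards [hgrowth, eventually_gt_atTop 0] with R hR hR0
    have hderiv := Complex.norm_iteratedDeriv_le_of_forall_mem_sphere_norm_le n hR0 hF.diffContOnCl
      fun z hz ↦ (hR z (mem_sphere_zero_iff_norm.1 hz)).trans_eq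
        (by rw [mem_sphere_zero_iff_norm.1 hz])
    have hfact : (0 : ℝ) < n.factorial := mod_cast n.factorial_pos
    rwa [mul_div_assoc, mul_div_assoc, ← div_le_iff₀' hfact, ← norm_natCast, ← norm_div] at hderiv
  have lim : Tendsto (fun R : ℝ ↦ C * (R ^ m / R ^ n)) atTop (𝓝 0) := by
    simpa using (tendsto_pow_div_pow_atTop_zero hmn).const_mul C
  exact norm_le_zero_iff.1 (ge_of_tendsto lim cauchy)

theorem exists_eq_eval_of_notMem_segment {F : ℂ → ℂ} (hF : Differentiable ℂ F) {a b : ℂ}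
    (hab : a ≠ b) (h : ∀ᶠ z in cobounded ℂ, F z ∉ segment ℝ a b) :
    ∃ P : ℂ[X], ∀ z, F z = P.eval z := by
  have hmero : MeromorphicAt (fun z ↦ F z⁻¹) 0 := by
    refine meromorphicAt_of_notMem_segment hab ?_ (tendsto_inv₀_nhdsNE_zero.eventually h)
    filter_upwards [self_mem_nhdsWithin] with z hz
    exact (hF _).comp z (differentiableAt_inv hz)
  obtain ⟨C, m, hgrowth⟩ := eventually_norm_le_mul_norm_pow hmero
  refine (support_taylorCoeff_finite_iff hF).1 ((finite_le_nat m).subset fun n hn ↦ ?_)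
  exact not_lt.1 fun hmn ↦ hn (taylorCoeff_eq_zero_of_growth hF hmn hgrowth)

theorem exists_eq_eval_of_finite_nodalComponents {F : ℂ → ℂ} (hF : Differentiable ℂ F)
    (hfin : (nodalComponents {z | (F z).re ≠ 0}).Finite) : ∃ P : ℂ[X], ∀ z, F z = P.eval z := by
  have hconvex : Convex ℝ {w : ℂ | w.re = 0} := convex_hyperplane reLm.isLinear 0
  by_cases hF' : deriv F = 0
  · exact ⟨C (F 0), fun z ↦ by
      rw [eval_C]
      exact is_const_of_deriv_eq_zero hF (congrFun hF') z 0⟩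
  have count {w : ℂ} (hw : w.re = 0) : {z | F z = w ∧ deriv F z ≠ 0}.encard ≤
      ((nodalComponents {z | (F z).re ≠ 0}).ncard ^ 2 : ℕ) := by
    rw [Nat.cast_pow, hfin.cast_ncard_eq]
    exact encard_simple_solutions_le hF hw
  obtain ⟨w₀, hw₀, R, hR⟩ := exists_eventually_fibre_subset_closedBall hF hF' ⟨0, zero_re⟩
    (hconvex.isPreconnected.preperfect_of_nontrivial ⟨0, zero_re, I, I_re, I_ne_zero.symm⟩)
    fun w hw ↦ count hw
  obtain ⟨ε, hε, hball⟩ := mem_nhdsWithin_iff.1 hR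
  have hsegment : segment ℝ w₀ (w₀ + (ε / 2 : ℝ) * I) ⊆ ball w₀ ε ∩ {w | w.re = 0} := by
    refine ((convex_ball w₀ ε).inter hconvex).segment_subset ⟨mem_ball_self hε, hw₀⟩ ⟨?_, ?_⟩
    · simpa [abs_of_pos hε] using hε
    · simpa using hw₀
  have hne : w₀ ≠ w₀ + (ε / 2 : ℝ) * I := by simp [hε.ne']
  refine exists_eq_eval_of_notMem_segment hF hne ?_
  filter_upwards [isBounded_def.1 isBounded_closedBall] with z hz hzs
  exact hz (hball (hsegment hzs) rfl)

end OmittedSegment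

section IsometryInvariance

open Set Laplacian Gradient InnerProductSpace
open scoped Topology

theorem nodalComponents_image {X Y : Type*} [TopologicalSpace X] [TopologicalSpace Y] (e : X ≃ₜ Y)
    (S : Set X) : nodalComponents (e '' S) = image e '' nodalComponents S := by
  change connectedComponentIn (e '' S) '' (e '' S) = image e '' (connectedComponentIn S '' S)
  rw [image_image, image_image]
  exact (image_congr fun x hx ↦ e.image_connectedComponentIn hx).symm

variable {E E' : Type*} [NormedAddCommGroup E] [InnerProductSpace ℝ E] [NormedAddCommGroup E']
  [InnerProductSpace ℝ E']

theorem norm_gradient_comp_linearIsometryEquiv [CompleteSpace E] [CompleteSpace E']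
    (e : E ≃ₗᵢ[ℝ] E') (f : E' → ℝ) (x : E) : ‖∇ (f ∘ e) x‖ = ‖∇ f (e x)‖ := by
  rw [← (toDual ℝ E).norm_map, ← (toDual ℝ E').norm_map, toDual_gradient, toDual_gradient]
  exact (congrArg norm e.toContinuousLinearEquiv.comp_right_fderiv).trans
    ((fderiv ℝ f (e x)).opNorm_comp_linearIsometryEquiv e)

theorem laplacian_comp_linearIsometryEquiv [FiniteDimensional ℝ E] [FiniteDimensional ℝ E']
    {G : Type*} [NormedAddCommGroup G] [NormedSpace ℝ G] (e : E ≃ₗᵢ[ℝ] E') (f : E' → G) (x : E) :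
    Δ (f ∘ e) x = Δ f (e x) := by
  let b := stdOrthonormalBasis ℝ E
  rw [laplacian_eq_iteratedFDeriv_orthonormalBasis _ b,
    laplacian_eq_iteratedFDeriv_orthonormalBasis _ (b.map e)]
  refine Finset.sum_congr rfl fun i _ ↦ ?_
  have hcomp := e.toContinuousLinearEquiv.iteratedFDerivWithin_comp_right f uniqueDiffOn_univ
    (mem_univ (e x)) 2
  rw [preimage_univ, iteratedFDerivWithin_univ, iteratedFDerivWithin_univ] at hcomp
  refine (DFunLike.congr_fun hcomp ![b i, b i]).trans ?_
  rw [ContinuousMultilinearMap.compContinuousLinearMap_apply, OrthonormalBasis.map_apply]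
  congr 1
  ext j
  fin_cases j <;> rfl

theorem laplacian_eq_lapl {n : ℕ} {u : EuclideanSpace ℝ (Fin n) → ℝ} (hu : ContDiff ℝ 2 u)
    (x : EuclideanSpace ℝ (Fin n)) : Δ u x = lapl u x := by
  have hdiff : DifferentiableAt ℝ (fderiv ℝ u) x :=
    (hu.fderiv_right (m := 1) le_rfl).differentiable one_ne_zero x
  rw [laplacian_eq_iteratedFDeriv_orthonormalBasis _ (EuclideanSpace.basisFun (Fin n) ℝ), lapl]
  refine Finset.sum_congr rfl fun i _ ↦ ?_
  rw [iteratedFDeriv_two_apply, fderiv_clm_apply hdiff (by fun_prop)]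
  simp

end IsometryInvariance

section ComplexPlane

open Complex Gradient InnerProductSpace Set Real
open scoped ComplexConjugate Topology

theorem norm_gradient_re {F : ℂ → ℂ} {z : ℂ} (hF : DifferentiableAt ℂ F z) :
    ‖∇ (fun z ↦ (F z).re) z‖ = ‖deriv F z‖ := by
  have hgrad : HasGradientAt (fun z ↦ (F z).re) (conj (deriv F z)) z := by
    have := reCLM.hasFDerivAt.comp z (hF.hasDerivAt.hasFDerivAt.restrictScalars ℝ)
    refine HasFDerivAt.congr_fderiv this ?_
    ext
    all_goals simp [Complex.inner]
  rw [hgrad.gradient, RCLike.norm_conj]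

variable {u : EuclideanSpace ℝ (Fin 2) → ℝ} {F : ℂ → ℂ} (e : ℂ ≃ₗᵢ[ℝ] EuclideanSpace ℝ (Fin 2))

theorem HarmonicFn.exists_differentiable_re_eq (hu : HarmonicFn u) :
    ∃ F : ℂ → ℂ, Differentiable ℂ F ∧ (F 0).im = 0 ∧ ∀ z, (F z).re = u (e z) := by
  have harmonic : HarmonicOnNhd (u ∘ e) univ := fun z _ ↦
    ⟨(hu.1.comp e.contDiff).contDiffAt, .of_forall fun z ↦ by
      rw [laplacian_comp_linearIsometryEquiv, laplacian_eq_lapl hu.1, hu.2, Pi.zero_apply]⟩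
  obtain ⟨F, hF, hre⟩ := harmonic.exists_analyticOnNhd_univ_re_eq
  refine ⟨fun z ↦ F z - (F 0).im * I, fun z ↦ (hF z trivial).differentiableAt.sub_const _, ?_, ?_⟩
  · simp
  · intro z
    simpa using congrFun hre z

theorem DInt_eq_setIntegral_norm_deriv_sq (hF : Differentiable ℂ F)
    (hre : ∀ z, (F z).re = u (e z)) (r : ℝ) :
    DInt u 0 r = ∫ z in ball (0 : ℂ) r, ‖deriv F z‖ ^ 2 := by
  have hgrad (z : ℂ) : ‖deriv F z‖ = ‖∇ u (e z)‖ := by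
    rw [← norm_gradient_re (hF z), funext hre, ← norm_gradient_comp_linearIsometryEquiv]
    rfl
  have hball : e ⁻¹' ball 0 r = ball 0 r := by simp
  simp only [hgrad]
  rw [DInt, ← hball]
  exact (e.measurePreserving.setIntegral_preimage_emb e.toHomeomorph.measurableEmbedding
    (fun x ↦ ‖∇ u x‖ ^ 2) (ball 0 r)).symm

theorem HInt_eq_circleAverage_re_sq (hF : Continuous F) (hre : ∀ z, (F z).re = u (e z)) (r : ℝ) :
    HInt u 0 r = μH[1].real (sphere (0 : ℂ) r) * circleAverage (fun z ↦ (F z).re ^ 2) 0 r := by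
  have hsphere : e ⁻¹' sphere 0 r = sphere 0 r := by simp
  have hdim : ((2 : ℕ) : ℝ) - 1 = 1 := by norm_num
  rw [← smul_eq_mul, ← setIntegral_sphere_hausdorffMeasure (by fun_prop), HInt, hdim, ← hsphere]
  simp only [hre]
  exact ((e.toIsometryEquiv.measurePreserving_hausdorffMeasure 1).setIntegral_preimage_emb
    e.toHomeomorph.measurableEmbedding (fun x ↦ u x ^ 2) (sphere 0 r)).symm

theorem freqN_eq_energy_div_height (hF : Differentiable ℂ F) (hre : ∀ z, (F z).re = u (e z))
    {r : ℝ} (hr : 0 < r) : freqN u 0 r = (μH[1].real (sphere (0 : ℂ) 1))⁻¹ *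
      ((∫ z in ball (0 : ℂ) r, ‖deriv F z‖ ^ 2) / circleAverage (fun z ↦ (F z).re ^ 2) 0 r) := by
  rw [freqN, DInt_eq_setIntegral_norm_deriv_sq e hF hre,
    HInt_eq_circleAverage_re_sq e hF.continuous hre, hausdorffMeasure_real_sphere hr]
  field_simp

theorem exists_tendsto_freqN_iff (hF : Differentiable ℂ F) (hre : ∀ z, (F z).re = u (e z)) :
    (∃ L, Tendsto (fun r ↦ freqN u 0 r) atTop (𝓝 L)) ↔
      ∃ L, Tendsto (fun r : ℝ ↦ (∫ z in ball (0 : ℂ) r, ‖deriv F z‖ ^ 2) /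
        circleAverage (fun z ↦ (F z).re ^ 2) 0 r) atTop (𝓝 L) := by
  have hκ : μH[1].real (sphere (0 : ℂ) 1) ≠ 0 :=
    (ENNReal.toReal_pos hausdorffMeasure_unitCircle_pos.ne'
      (hausdorffMeasure_sphere_lt_top 1).ne).ne'
  rw [exists_congr fun L ↦ tendsto_congr' ((eventually_gt_atTop 0).mono fun r hr ↦
    freqN_eq_energy_div_height e hF hre hr)]
  refine ⟨fun ⟨L, hL⟩ ↦ ⟨_, (hL.const_mul (μH[1].real (sphere (0 : ℂ) 1))).congr fun r ↦ ?_⟩,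
    fun ⟨L, hL⟩ ↦ ⟨_, hL.const_mul _⟩⟩
  rw [mul_inv_cancel_left₀ hκ]

theorem finite_nodalComponents_iff (hre : ∀ z, (F z).re = u (e z)) :
    (nodalComponents {x | u x ≠ 0}).Finite ↔ (nodalComponents {z | (F z).re ≠ 0}).Finite := by
  have himage : {x | u x ≠ 0} = e.toHomeomorph '' {z | (F z).re ≠ 0} := by
    simp only [hre]
    exact (image_preimage_eq {x | u x ≠ 0} e.surjective).symm
  rw [himage, nodalComponents_image,
    finite_image_iff e.toHomeomorph.injective.image_injective.injOn]

end ComplexPlane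

/-- **Proposition 5.3 (equivalence part)**: for a nontrivial entire harmonic function on ℝ²,
having finitely many nodal regions is equivalent to the Almgren frequency at the origin
having a finite limit at infinity. -/
theorem components_iff_finite_frequency
    (u : EuclideanSpace ℝ (Fin 2) → ℝ) (hu : HarmonicFn u) (hu0 : ∃ x, u x ≠ 0) :
    (∃ k : ℕ, 1 ≤ k ∧ (nodalComponents {x | u x ≠ 0}).Finite ∧
        (nodalComponents {x | u x ≠ 0}).ncard = k) ↔
      (∃ Ninf : ℝ, Tendsto (fun t => freqN u 0 t) atTop (nhds Ninf)) := by
  let e := Complex.orthonormalBasisOneI.repr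
  obtain ⟨F, hF, hF0, hre⟩ := hu.exists_differentiable_re_eq e
  have hne : F ≠ 0 := by
    rintro rfl
    obtain ⟨x, hx⟩ := hu0
    exact hx (by simpa using (hre (e.symm x)).symm)
  have components_iff_polynomial :
      (nodalComponents {x | u x ≠ 0}).Finite ↔ ∃ P : Polynomial ℂ, ∀ z, F z = P.eval z := by
    rw [finite_nodalComponents_iff e hre]
    refine ⟨exists_eq_eval_of_finite_nodalComponents hF, fun ⟨P, hP⟩ ↦ ?_⟩
    simpa only [hP] using finite_nodalComponents_re_eval P
  rw [exists_tendsto_freqN_iff e hF hre, exists_tendsto_energy_div_height_iff hF hF0 hne,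
    ← components_iff_polynomial]
  refine ⟨fun ⟨_, _, hfin, _⟩ ↦ hfin, fun hfin ↦ ⟨_, ?_, hfin, rfl⟩⟩
  obtain ⟨x, hx⟩ := hu0
  exact (Set.ncard_pos hfin).2 ⟨_, x, hx, rfl⟩
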